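/- arXiv:2010.02420 — 3 statements merged into one kernel-verified Lean document; each statement's English description precedes it below -/
import Mathlib

section
/- Let M be a definably complete locally o-minimal densely linearly ordered structure. Then every definable function f defined on an open interval I ⊆ M that is locally strictly increasing (i.e., every point of I has a neighborhood in I on which f is strictly increasing) is strictly increasing on I; similarly, every locally strictly decreasing definable function on an open interval is strictly decreasing. -/
open FirstOrder Set

/-- A subset of `M^α` definable with parameters from all of `M`. -/
def DefSet (L : FirstOrder.Language) {M : Type*} [L.Structure M] {α : Type*}
    (s : Set (α → M)) : Prop :=
  Set.Definable (Set.univ : Set M) L s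

/-- A subset of `M` definable with parameters from all of `M`. -/
def DefSet1 (L : FirstOrder.Language) {M : Type*} [L.Structure M] (s : Set M) : Prop :=
  DefSet L {x : Fin 1 → M | x 0 ∈ s}

/-- The language contains the order and the group operation:
the order relation and the graph of addition are definable without parameters
(here: with parameters, which is what is used). -/
def OrdAddDef (L : FirstOrder.Language) (M : Type*) [L.Structure M] [Preorder M] [Add M] : Prop :=
  DefSet L {x : Fin 2 → M | x 0 < x 1} ∧ DefSet L {x : Fin 3 → M | x 0 + x 1 = x 2}

/-- An open interval, with endpoints allowed to be `±∞`. -/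
def IsOpenItvl {M : Type*} [Preorder M] (s : Set M) : Prop :=
  (∃ a b : M, s = Set.Ioo a b) ∨ (∃ a : M, s = Set.Ioi a) ∨ (∃ b : M, s = Set.Iio b) ∨
    s = Set.univ

/-- A finite union of points and open intervals. -/
def FinUnionPtsItvls {M : Type*} [Preorder M] (s : Set M) : Prop :=
  ∃ (k : ℕ) (f : Fin k → Set M),
    (∀ i, (∃ x, f i = {x}) ∨ IsOpenItvl (f i)) ∧ s = ⋃ i, f i

/-- Definably complete. -/
def DefComplete (L : FirstOrder.Language) (M : Type*) [L.Structure M] [Preorder M] : Prop :=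
  ∀ s : Set M, DefSet1 L s → s.Nonempty → BddAbove s → ∃ a : M, IsLUB s a

/-- Locally o-minimal. -/
def LocOMin (L : FirstOrder.Language) (M : Type*) [L.Structure M] [Preorder M] : Prop :=
  ∀ s : Set M, DefSet1 L s → ∀ a : M,
    ∃ c d : M, c < a ∧ a < d ∧ FinUnionPtsItvls (s ∩ Set.Ioo c d)

/-- Uniformly locally o-minimal of the second kind. -/
def ULOmin2 (L : FirstOrder.Language) (M : Type*) [L.Structure M] [Preorder M] : Prop :=
  ∀ n : ℕ, 0 < n → ∀ X : Set (Fin n ⊕ Unit → M), DefSet L X →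
    ∀ (a : M) (b : Fin n → M),
      ∃ (lo hi : Fin n → M) (c d : M),
        (∀ i, lo i < b i ∧ b i < hi i) ∧ c < a ∧ a < d ∧
        ∀ y : Fin n → M, (∀ i, lo i < y i ∧ y i < hi i) →
          FinUnionPtsItvls {t : M | t ∈ Set.Ioo c d ∧ Sum.elim y (fun _ => t) ∈ X}

/-- The function `f`, restricted to `C ⊆ M`, is definable (its graph over `C` is definable). -/
def DefFunOn1 (L : FirstOrder.Language) {M : Type*} [L.Structure M]
    (C : Set M) (f : M → M) : Prop :=
  DefSet L {x : Fin 2 → M | x 0 ∈ C ∧ f (x 0) = x 1}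

/-- The function `f : M^m → M`, restricted to `C`, is definable. -/
def DefFunOn (L : FirstOrder.Language) {M : Type*} [L.Structure M] {m : ℕ}
    (C : Set (Fin m → M)) (f : (Fin m → M) → M) : Prop :=
  DefSet L {x : Fin m ⊕ Unit → M | (x ∘ Sum.inl) ∈ C ∧ f (x ∘ Sum.inl) = x (Sum.inr ())}

theorem aux_subst (L : FirstOrder.Language) {M : Type*} [L.Structure M] {α β : Type*}
    {s : Set (α → M)} (hs : DefSet L s) (g : α → β ⊕ M) :
    DefSet L {v : β → M | (fun i => Sum.elim v id (g i)) ∈ s} := by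
  obtain ⟨φ, rfl⟩ := hs
  let t : α → (L[[(Set.univ : Set M)]]).Term β := fun i =>
    Sum.elim (fun j => FirstOrder.Language.Term.var j)
      (fun m => (L.con (⟨m, trivial⟩ : (Set.univ : Set M))).term) (g i)
  refine ⟨FirstOrder.Language.BoundedFormula.subst φ t, ?_⟩
  ext v
  have ht : (fun i => (t i).realize v) = fun i => Sum.elim v id (g i) := by
    funext i
    simp only [t]
    rcases g i with j | m <;> simp
  simp only [Set.mem_setOf_eq, FirstOrder.Language.Formula.Realize,
    FirstOrder.Language.BoundedFormula.realize_subst, ht]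

theorem aux_glb (L : FirstOrder.Language) {M : Type*} [L.Structure M] [LinearOrder M]
    (hlt : DefSet L {x : Fin 2 → M | x 0 < x 1}) (hdc : DefComplete L M)
    (C : Set M) (f : M → M) (hf : DefFunOn1 L C f) (E : Set M) (hE : DefSet1 L E) (p u : M)
    (hu : p < u ∧ u ∈ C ∧ f u ∈ E) :
    ∃ s, p ≤ s ∧ s ≤ u ∧ (∀ z ∈ C, p < z → z < s → f z ∉ E) ∧
      ∀ t, s < t → ∃ z ∈ C, p < z ∧ z ≤ t ∧ f z ∈ E := by
  have h1 := aux_subst L hlt (β := Fin 3) ![Sum.inr p, Sum.inl 1]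
  have h2 := aux_subst L hf (β := Fin 3) ![Sum.inl 1, Sum.inl 2]
  have h3 := aux_subst L hE (β := Fin 3) ![Sum.inl 2]
  have h4 := aux_subst L hlt (β := Fin 3) ![Sum.inl 0, Sum.inl 1]
  have h5 : Set.Definable _ L _ :=
    ((((Set.Definable.inter h1 h2).inter h3).sdiff h4).image_comp (![0] : Fin 1 → Fin 3)).compl
  have h6 : DefSet1 L {y : M | ∀ z ∈ C, p < z → f z ∈ E → y < z} := by
    unfold DefSet1 DefSet
    convert h5 using 1
    ext v
    simp only [Set.mem_setOf_eq, Set.mem_compl_iff, Set.mem_image, Set.mem_diff, Set.mem_inter_iff]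
    constructor
    · rintro h ⟨w, ⟨⟨⟨a1, a2⟩, a3⟩, a4⟩, rfl⟩
      simp at a1 a2 a3 a4 h
      exact absurd (h _ a2.1 a1 (by rw [a2.2]; exact a3)) (not_lt.2 a4)
    · intro h z hz hp hfz
      by_contra hc
      refine h ⟨![v 0, z, f z], ⟨⟨⟨?_, ?_⟩, ?_⟩, ?_⟩, ?_⟩
      · simpa using hp
      · simpa using hz
      · simpa using hfz
      · simpa using hc
      · funext i
        fin_cases i
        rfl
  obtain ⟨s, hs⟩ := hdc _ h6 ⟨p, fun z _ h _ => h⟩ ⟨u, fun y hy => (hy u hu.2.1 hu.1 hu.2.2).le⟩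
  refine ⟨s, hs.1 fun z _ h _ => h, hs.2 fun y hy => (hy u hu.2.1 hu.1 hu.2.2).le, ?_, ?_⟩
  · intro z hz hp hzs hE
    exact absurd (hs.2 fun y hy => (hy z hz hp hE).le) (not_le.2 hzs)
  · intro t ht
    by_contra hc
    push Not at hc
    exact absurd (hs.1 fun z hz hp hE => lt_of_not_ge fun h => hc z hz hp h hE) (not_le.2 ht)

/-- The common argument, for a strict order `R` on the values that is total and definable. -/
theorem aux_main (L : FirstOrder.Language) {M : Type*} [L.Structure M] [LinearOrder M]
    [DenselyOrdered M]
    (hlt : DefSet L {x : Fin 2 → M | x 0 < x 1}) (hdc : DefComplete L M)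
    (R : M → M → Prop) (hR : ∀ x y z, R x y → R y z → R x z)
    (hRd : ∀ q, DefSet1 L {w | ¬ R q w}) (a b : M) (f : M → M)
    (hf : DefFunOn1 L (Set.Ioo a b) f)
    (hl : ∀ x ∈ Set.Ioo a b, ∃ c d : M, c < x ∧ x < d ∧ Set.Ioo c d ⊆ Set.Ioo a b ∧
        ∀ y ∈ Set.Ioo c d, ∀ z ∈ Set.Ioo c d, y < z → R (f y) (f z)) :
    ∀ y ∈ Set.Ioo a b, ∀ z ∈ Set.Ioo a b, y < z → R (f y) (f z) := by
  intro x hx u hu hxu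
  by_contra hc
  obtain ⟨s, hxs, hsu, h1, h2⟩ := aux_glb L hlt hdc _ f hf _ (hRd (f x)) x u ⟨hxu, hu, hc⟩
  have hsI : s ∈ Set.Ioo a b := ⟨hx.1.trans_le hxs, hsu.trans_lt hu.2⟩
  obtain ⟨c, d, hcs, hsd, hI, hm⟩ := hl s hsI
  have key : ∀ z, x < z → z < d → R (f x) (f z) := by
    intro z hxz hzd
    by_cases hzs : z < s
    · by_contra hh
      exact h1 z ⟨hx.1.trans hxz, hzs.trans hsI.2⟩ hxz hzs hh
    have hsz := not_lt.1 hzs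
    rcases hxs.eq_or_lt with rfl | hxs
    · exact hm _ ⟨hcs, hsd⟩ _ ⟨hcs.trans hxz, hzd⟩ hxz
    · obtain ⟨t, ht, hts⟩ := exists_between (max_lt hcs hxs)
      have hct := (le_max_left _ _).trans_lt ht
      have hxt := (le_max_right _ _).trans_lt ht
      have : R (f x) (f t) := by
        by_contra hh
        exact h1 t ⟨hx.1.trans hxt, hts.trans hsI.2⟩ hxt hts hh
      exact hR _ _ _ this
        (hm _ ⟨hct, hts.trans hsd⟩ _ ⟨hcs.trans_le hsz, hzd⟩ (hts.trans_le hsz))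
  obtain ⟨t, hst, htd⟩ := exists_between hsd
  obtain ⟨z, _, hxz, hzt, hE⟩ := h2 t hst
  exact hE (key z hxz (hzt.trans_lt htd))

/-- Locally strictly monotone definable functions on an open interval
are strictly monotone, in a definably complete locally o-minimal structure. -/
theorem stmt_2 (L : FirstOrder.Language) (M : Type*) [L.Structure M]
    [LinearOrder M] [DenselyOrdered M] [NoMinOrder M] [NoMaxOrder M] [Nonempty M]
    (hlt : DefSet L {x : Fin 2 → M | x 0 < x 1})
    (hdc : DefComplete L M) (hlo : LocOMin L M) :
    (∀ (a b : M) (f : M → M), DefFunOn1 L (Set.Ioo a b) f →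
      (∀ x ∈ Set.Ioo a b, ∃ c d : M, c < x ∧ x < d ∧ Set.Ioo c d ⊆ Set.Ioo a b ∧
        StrictMonoOn f (Set.Ioo c d)) →
      StrictMonoOn f (Set.Ioo a b)) ∧
    (∀ (a b : M) (f : M → M), DefFunOn1 L (Set.Ioo a b) f →
      (∀ x ∈ Set.Ioo a b, ∃ c d : M, c < x ∧ x < d ∧ Set.Ioo c d ⊆ Set.Ioo a b ∧
        StrictAntiOn f (Set.Ioo c d)) →
      StrictAntiOn f (Set.Ioo a b)) := by
  constructor
  · intro a b f hf hl
    have := aux_main L hlt hdc (· < ·) (fun _ _ _ => lt_trans) (fun q => by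
      have := Set.Definable.compl (aux_subst L hlt (β := Fin 1) ![Sum.inr q, Sum.inl 0])
      exact this) a b f hf (fun x hx => by
        obtain ⟨c, d, h1, h2, h3, h4⟩ := hl x hx
        exact ⟨c, d, h1, h2, h3, fun y hy z hz h => h4 hy hz h⟩)
    exact fun y hy z hz h => this y hy z hz h
  · intro a b f hf hl
    have := aux_main L hlt hdc (· > ·) (fun _ _ _ h h' => lt_trans h' h) (fun q => by
      have := Set.Definable.compl (aux_subst L hlt (β := Fin 1) ![Sum.inl 0, Sum.inr q])
      exact this) a b f hf (fun x hx => by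
        obtain ⟨c, d, h1, h2, h3, h4⟩ := hl x hx
        exact ⟨c, d, h1, h2, h3, fun y hy z hz h => h4 hy hz h⟩)
    exact fun y hy z hz h => this y hy z hz h
end

section
/- Let M be an o-minimal densely linearly ordered structure. Then M has a definable bijection between a bounded interval and an unbounded interval if and only if M has a definable homeomorphism between a bounded interval and an unbounded interval. -/
open FirstOrder Set

/-- A bounded open interval of `M`. -/
def IsBddItvl {M : Type*} [Preorder M] (I : Set M) : Prop :=
  ∃ a b : M, a < b ∧ I = Set.Ioo a b

/-- An unbounded open interval of `M`. -/
def IsUnbddItvl {M : Type*} [Preorder M] (J : Set M) : Prop :=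
  (∃ a : M, J = Set.Ioi a) ∨ (∃ b : M, J = Set.Iio b) ∨ J = Set.univ


namespace OMaux

open FirstOrder.Language

section Logic

variable {L : FirstOrder.Language} {M : Type*} [L.Structure M] {α : Type}

/-- Definable predicates on `α → M`. -/
def Dp (L : FirstOrder.Language) {M : Type*} [L.Structure M] {α : Type}
    (p : (α → M) → Prop) : Prop :=
  Set.Definable (Set.univ : Set M) L {v : α → M | p v}

theorem Dp.and {p q : (α → M) → Prop} (hp : Dp L p) (hq : Dp L q) :
    Dp L (fun v => p v ∧ q v) := Set.Definable.inter hp hq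

theorem Dp.not {p : (α → M) → Prop} (hp : Dp L p) : Dp L (fun v => ¬ p v) :=
  Set.Definable.compl hp

theorem Dp.imp {p q : (α → M) → Prop} (hp : Dp L p) (hq : Dp L q) :
    Dp L (fun v => p v → q v) := by
  have h : (fun v => p v → q v) = (fun v => ¬ (p v ∧ ¬ q v)) := by
    funext v; simp
  rw [h]; exact (hp.and hq.not).not

theorem Dp.ex {A : Type*} (e : A ≃ M) {p : (α → M) → A → Prop}
    (h : Dp L (fun w : Option α → M => p (fun i => w (some i)) (e.symm (w none)))) :
    Dp L (fun v => ∃ x, p v x) := by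
  obtain ⟨φ, hφ⟩ := h
  let ρ : Option α → α ⊕ Unit := fun o => o.elim (Sum.inr ()) Sum.inl
  refine ⟨(φ.relabel ρ).iExs Unit, ?_⟩
  ext v
  have hφ' : ∀ w, p (fun i => w (some i)) (e.symm (w none)) ↔ φ.Realize w := fun w => by
    exact Set.ext_iff.1 hφ w
  show (∃ x, p v x) ↔ ((φ.relabel ρ).iExs Unit).Realize v
  rw [Formula.realize_iExs]
  constructor
  · rintro ⟨x, hx⟩
    refine ⟨fun _ => e x, ?_⟩
    rw [Formula.realize_relabel, ← hφ']
    simpa [ρ] using hx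
  · rintro ⟨i, hi⟩
    rw [Formula.realize_relabel, ← hφ'] at hi
    exact ⟨_, hi⟩

theorem Dp.all {A : Type*} (e : A ≃ M) {p : (α → M) → A → Prop}
    (h : Dp L (fun w : Option α → M => p (fun i => w (some i)) (e.symm (w none)))) :
    Dp L (fun v => ∀ x, p v x) := by
  have h2 : (fun v => ∀ x, p v x) = (fun v => ¬ ∃ x, ¬ p v x) := by
    funext v; simp
  rw [h2]; exact (Dp.ex e (p := fun v x => ¬ p v x) h.not).not

/-- Variables and constants. -/
def Tm {A : Type*} (e : A ≃ M) (s : (α → M) → A) : Prop :=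
  (∃ i, s = fun v => e.symm (v i)) ∨ ∃ c, s = fun _ => c

theorem Tm.var {A : Type*} {e : A ≃ M} (i : α) : Tm e (fun v : α → M => e.symm (v i)) :=
  Or.inl ⟨i, rfl⟩

theorem Tm.const {A : Type*} {e : A ≃ M} (c : A) : Tm e (fun _ : α → M => c) :=
  Or.inr ⟨c, rfl⟩

theorem Tm.term (L : FirstOrder.Language) [L.Structure M]
    {A : Type*} {e : A ≃ M} {s : (α → M) → A} (h : Tm e s) :
    ∃ τ : L[[(Set.univ : Set M)]].Term α, ∀ v, τ.realize v = e (s v) := by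
  rcases h with ⟨i, rfl⟩ | ⟨c, rfl⟩
  · exact ⟨Term.var i, fun v => by simp⟩
  · exact ⟨(L.con (⟨e c, trivial⟩ : (Set.univ : Set M))).term, fun v => Term.realize_con⟩

/-- Definable binary relations. -/
def D2 (L : FirstOrder.Language) {M : Type*} [L.Structure M] {A B : Type*}
    (eA : A ≃ M) (eB : B ≃ M) (R : A → B → Prop) : Prop :=
  Dp L (fun v : Fin 2 → M => R (eA.symm (v 0)) (eB.symm (v 1)))

theorem D2.rel {A B : Type*} {eA : A ≃ M} {eB : B ≃ M} {R : A → B → Prop}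
    (h : D2 L eA eB R) {s : (α → M) → A} {t : (α → M) → B} (hs : Tm eA s) (ht : Tm eB t) :
    Dp L (fun v => R (s v) (t v)) := by
  obtain ⟨φ, hφ⟩ := h
  obtain ⟨σ, hσ⟩ := hs.term L
  obtain ⟨τ, hτ⟩ := ht.term L
  refine ⟨BoundedFormula.subst φ ![σ, τ], ?_⟩
  ext v
  have hφ' : ∀ w : Fin 2 → M, R (eA.symm (w 0)) (eB.symm (w 1)) ↔ φ.Realize w := fun w => by
    exact Set.ext_iff.1 hφ w
  show R (s v) (t v) ↔ BoundedFormula.Realize (BoundedFormula.subst φ ![σ, τ]) v default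
  rw [BoundedFormula.realize_subst]
  have := hφ' (fun a => (![σ, τ] a).realize v)
  simp only [Matrix.cons_val_zero, Matrix.cons_val_one, hσ, hτ, Equiv.symm_apply_apply] at this
  exact this

end Logic

section Order

theorem fin_ind {A : Type*} [Preorder A] (Q : Set A → Prop) (h0 : Q ∅)
    (hpt : ∀ x, Q {x}) (hI : ∀ s, IsOpenItvl s → Q s) (hU : ∀ s t, Q s → Q t → Q (s ∪ t))
    {X : Set A} (hX : FinUnionPtsItvls X) : Q X := by
  obtain ⟨k, f, hf, rfl⟩ := hX
  have hf' : ∀ i, Q (f i) := fun i => by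
    rcases hf i with ⟨x, hx⟩ | h
    · rw [hx]; exact hpt x
    · exact hI _ h
  clear hf
  induction k with
  | zero => simpa using h0
  | succ n ih =>
    have : (⋃ i, f i) = f 0 ∪ ⋃ i : Fin n, f i.succ := by
      ext x; simp [Fin.exists_fin_succ]
    rw [this]
    exact hU _ _ (hf' 0) (ih _ fun i => hf' _)

variable {A : Type*} [LinearOrder A] [DenselyOrdered A] [NoMinOrder A] [NoMaxOrder A]

theorem sup_ex {X : Set A} (hX : FinUnionPtsItvls X) (hne : X.Nonempty) (hb : BddAbove X) :
    ∃ a, IsLUB X a := by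
  have : X = ∅ ∨ ¬ BddAbove X ∨ ∃ a, IsLUB X a := by
    refine fin_ind (fun X => X = ∅ ∨ ¬ BddAbove X ∨ ∃ a, IsLUB X a) (Or.inl rfl)
      (fun x => Or.inr (Or.inr ⟨x, isLUB_singleton⟩)) ?_ ?_ hX
    · rintro s (⟨a, b, rfl⟩ | ⟨a, rfl⟩ | ⟨b, rfl⟩ | rfl)
      · by_cases h : a < b
        · exact Or.inr (Or.inr ⟨b, isLUB_Ioo h⟩)
        · exact Or.inl (Ioo_eq_empty h)
      · exact Or.inr (Or.inl (not_bddAbove_Ioi a))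
      · exact Or.inr (Or.inr ⟨b, isLUB_Iio⟩)
      · by_cases h : Nonempty A
        · exact Or.inr (Or.inl not_bddAbove_univ)
        · left; ext x; exact (h ⟨x⟩).elim
    · rintro s t (rfl | hs | ⟨a, ha⟩) ht
      · simpa using ht
      · exact Or.inr (Or.inl fun h => hs (h.mono subset_union_left))
      · rcases ht with rfl | ht | ⟨b, hb⟩
        · right; right; exact ⟨a, by simpa using ha⟩
        · exact Or.inr (Or.inl fun h => ht (h.mono subset_union_right))
        · exact Or.inr (Or.inr ⟨_, ha.union hb⟩)
  rcases this with h | h | h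
  · exact (hne.ne_empty h).elim
  · exact (h hb).elim
  · exact h

theorem dich_left {X : Set A} (hX : FinUnionPtsItvls X) (l : A) :
    ∃ e < l, (∀ y, e < y → y < l → y ∈ X) ∨ (∀ y, e < y → y < l → y ∉ X) := by
  obtain ⟨m, hm⟩ := exists_lt l
  refine fin_ind (fun X => ∃ e < l, (∀ y, e < y → y < l → y ∈ X) ∨
    (∀ y, e < y → y < l → y ∉ X)) ⟨m, hm, Or.inr (by simp)⟩ ?_ ?_ ?_ hX
  · intro x
    by_cases h : x < l
    · exact ⟨x, h, Or.inr fun y hy _ => hy.ne'⟩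
    · exact ⟨m, hm, Or.inr fun y _ hy h' => h (by rw [mem_singleton_iff] at h'; rwa [← h'])⟩
  · rintro s (⟨a, b, rfl⟩ | ⟨a, rfl⟩ | ⟨b, rfl⟩ | rfl)
    · by_cases ha : a < l
      · by_cases hb : b < l
        · exact ⟨b, hb, Or.inr fun y hy _ h => lt_asymm hy h.2⟩
        · exact ⟨a, ha, Or.inl fun y hy h => ⟨hy, h.trans_le (not_lt.1 hb)⟩⟩
      · exact ⟨m, hm, Or.inr fun y _ hy h => ha (h.1.trans hy)⟩
    · by_cases ha : a < l
      · exact ⟨a, ha, Or.inl fun y hy h => hy⟩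
      · exact ⟨m, hm, Or.inr fun y _ hy h => ha (lt_trans h hy)⟩
    · by_cases hb : b < l
      · exact ⟨b, hb, Or.inr fun y hy _ h => lt_asymm hy h⟩
      · exact ⟨m, hm, Or.inl fun y hy h => h.trans_le (not_lt.1 hb)⟩
    · exact ⟨m, hm, Or.inl fun y hy h => trivial⟩
  · rintro s t ⟨e, he, h1⟩ ⟨e', he', h2⟩
    refine ⟨max e e', max_lt he he', ?_⟩
    rcases h1 with h1 | h1
    · exact Or.inl fun y hy h => Or.inl (h1 y ((le_max_left _ _).trans_lt hy) h)
    · rcases h2 with h2 | h2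
      · exact Or.inl fun y hy h => Or.inr (h2 y ((le_max_right _ _).trans_lt hy) h)
      · exact Or.inr fun y hy h hh => hh.elim (h1 y ((le_max_left _ _).trans_lt hy) h)
          (h2 y ((le_max_right _ _).trans_lt hy) h)

theorem dich_top [Nonempty A] {X : Set A} (hX : FinUnionPtsItvls X) :
    ∃ e, (∀ y, e < y → y ∈ X) ∨ (∀ y, e < y → y ∉ X) := by
  obtain ⟨m⟩ := ‹Nonempty A›
  refine fin_ind (fun X => ∃ e, (∀ y, e < y → y ∈ X) ∨
    (∀ y, e < y → y ∉ X)) ⟨m, Or.inr (by simp)⟩ ?_ ?_ ?_ hX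
  · intro x
    exact ⟨x, Or.inr fun y hy => hy.ne'⟩
  · rintro s (⟨a, b, rfl⟩ | ⟨a, rfl⟩ | ⟨b, rfl⟩ | rfl)
    · exact ⟨b, Or.inr fun y hy h => lt_asymm hy h.2⟩
    · exact ⟨a, Or.inl fun y hy => hy⟩
    · exact ⟨b, Or.inr fun y hy h => lt_asymm hy h⟩
    · exact ⟨m, Or.inl fun y hy => trivial⟩
  · rintro s t ⟨e, h1⟩ ⟨e', h2⟩
    refine ⟨max e e', ?_⟩
    rcases h1 with h1 | h1
    · exact Or.inl fun y hy => Or.inl (h1 y ((le_max_left _ _).trans_lt hy))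
    · rcases h2 with h2 | h2
      · exact Or.inl fun y hy => Or.inr (h2 y ((le_max_right _ _).trans_lt hy))
      · exact Or.inr fun y hy hh => hh.elim (h1 y ((le_max_left _ _).trans_lt hy))
          (h2 y ((le_max_right _ _).trans_lt hy))

/-- Order-preserving bijections of intervals are homeomorphisms. -/
theorem homeo {A B : Type*} [LinearOrder A] [LinearOrder B]
    [TopologicalSpace A] [OrderTopology A] [TopologicalSpace B] [OrderTopology B]
    [Nonempty A] (I : Set A) (J : Set B) (hI : I.OrdConnected) (hJ : J.OrdConnected)
    (k : A → B) (hk : StrictMonoOn k I) (him : k '' I = J) :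
    ∃ g : B → A, ContinuousOn k I ∧ ContinuousOn g J ∧
      (∀ x ∈ I, g (k x) = x) ∧ (∀ y ∈ J, k (g y) = y) := by
  subst him
  have hinv : ∀ x ∈ I, Function.invFunOn k I (k x) = x := fun x hx =>
    hk.injOn.leftInvOn_invFunOn hx
  refine ⟨Function.invFunOn k I, ?_, ?_, hinv, ?_⟩
  · rw [continuousOn_iff_continuous_domRestrict]
    exact continuous_subtype_val.comp (hk.orderIso k I).continuous
  · rw [continuousOn_iff_continuous_domRestrict]
    have := continuous_subtype_val.comp (hk.orderIso k I).symm.continuous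
    convert this using 1
    funext y
    obtain ⟨⟨x, hx⟩, rfl⟩ := (hk.orderIso k I).surjective y
    simp only [Function.comp, OrderIso.symm_apply_apply]
    exact hinv x hx
  · rintro _ ⟨x, hx, rfl⟩
    rw [hinv x hx]

end Order

section Core

variable {L : FirstOrder.Language} {M : Type*} [L.Structure M]

/-- `A` is `M` with a definable o-minimal order. -/
structure OM (L : FirstOrder.Language) {M : Type*} [L.Structure M] {A : Type*} [LinearOrder A]
    (e : A ≃ M) : Prop where
  lt : D2 L e e (fun x y : A => x < y)
  omin : ∀ X : Set A, Dp L (fun v : Fin 1 → M => e.symm (v 0) ∈ X) → FinUnionPtsItvls X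

variable {A B : Type*} [LinearOrder A] [DenselyOrdered A] [NoMinOrder A] [NoMaxOrder A]
  [LinearOrder B] [DenselyOrdered B] [NoMinOrder B] [NoMaxOrder B]
  {eA : A ≃ M} {eB : B ≃ M}

theorem pre (hA : OM L eA) (hB : OM L eB) (g : B → A) (c : B) (a b : A)
    (hP : D2 L eA eB (fun x t => c < t ∧ g t = x))
    (ha : ∀ t, c < t → a < g t) (hb : ∀ t, c < t → g t < b) (hinj : InjOn g (Ioi c)) :
    ∃ l c', D2 L eA eB (fun x t => c' < t ∧ g t = x) ∧
      (((∀ t, c' < t → g t < l) ∧ ∀ y < l, ∃ d, ∀ t, d < t → y < g t) ∨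
       ((∀ t, c' < t → l < g t) ∧ ∀ y, l < y → ∃ d, ∀ t, d < t → g t < y)) := by
  have : Nonempty B := ⟨c⟩
  have hPc : ∀ c', c ≤ c' → D2 L eA eB (fun x t => c' < t ∧ g t = x) := by
    intro c' hc
    have : (fun x t => c' < t ∧ g t = x) = (fun x t => c' < t ∧ (c < t ∧ g t = x)) := by
      funext x t
      refine propext ⟨fun h => ⟨h.1, hc.trans_lt h.1, h.2⟩, fun h => ⟨h.1, h.2.2⟩⟩
    rw [this]
    exact Dp.and (hB.lt.rel (.const _) (.var _)) (hP.rel (.var _) (.var _))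
  -- eventual dichotomies
  have dgt : ∀ y, ∃ d, (∀ t, d < t → y < g t) ∨ (∀ t, d < t → ¬ y < g t) := by
    intro y
    have hd : FinUnionPtsItvls {t : B | ∃ x, (c < t ∧ g t = x) ∧ y < x} := by
      apply hB.omin
      apply Dp.ex eA
      exact Dp.and (hP.rel (.var _) (.var _)) (hA.lt.rel (.const _) (.var _))
    obtain ⟨d, h⟩ := dich_top hd
    refine ⟨max c d, ?_⟩
    rcases h with h | h
    · left
      intro t ht
      obtain ⟨x, ⟨_, rfl⟩, h2⟩ := h t ((le_max_right _ _).trans_lt ht)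
      exact h2
    · right
      intro t ht h2
      exact h t ((le_max_right _ _).trans_lt ht)
        ⟨g t, ⟨(le_max_left _ _).trans_lt ht, rfl⟩, h2⟩
  let Y : Set A := {y | ∃ d, ∀ t, d < t → ∃ x, (c < t ∧ g t = x) ∧ y < x}
  have hY : FinUnionPtsItvls Y := by
    apply hA.omin
    apply Dp.ex eB
    apply Dp.all eB
    apply Dp.imp (hB.lt.rel (.var _) (.var _))
    apply Dp.ex eA
    exact Dp.and (hP.rel (.var _) (.var _)) (hA.lt.rel (.var _) (.var _))
  have hYmem : ∀ y d, (∀ t, d < t → y < g t) → y ∈ Y := fun y d h =>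
    ⟨max c d, fun t ht => ⟨g t, ⟨(le_max_left _ _).trans_lt ht, rfl⟩,
      h t ((le_max_right _ _).trans_lt ht)⟩⟩
  have hYmem' : ∀ y ∈ Y, ∃ d, ∀ t, d < t → y < g t := by
    rintro y ⟨d, h⟩
    refine ⟨d, fun t ht => ?_⟩
    obtain ⟨x, ⟨_, rfl⟩, h2⟩ := h t ht
    exact h2
  obtain ⟨l, hl⟩ := sup_ex hY ⟨a, hYmem a c ha⟩ ⟨b, by
    intro y hy
    obtain ⟨d, h⟩ := hYmem' y hy
    obtain ⟨t, ht⟩ := exists_gt (max c d)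
    exact ((h t ((le_max_right _ _).trans_lt ht)).trans
      (hb t ((le_max_left _ _).trans_lt ht))).le⟩
  have low : ∀ y < l, ∃ d, ∀ t, d < t → y < g t := by
    intro y hy
    obtain ⟨z, hz, hyz⟩ := (lt_isLUB_iff hl).1 hy
    obtain ⟨d, h⟩ := hYmem' z hz
    exact ⟨d, fun t ht => hyz.trans (h t ht)⟩
  have high : ∀ y, l < y → ∃ d, ∀ t, d < t → g t < y := by
    intro y hy
    obtain ⟨z, hlz, hzy⟩ := exists_between hy
    obtain ⟨d, h | h⟩ := dgt z
    · exact absurd (hl.1 (hYmem z d h)) (not_le.2 hlz)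
    · exact ⟨d, fun t ht => (not_lt.1 (h t ht)).trans_lt hzy⟩
  -- eventually `g t ≠ l`
  have hne : ∃ d, c ≤ d ∧ ∀ t, d < t → g t ≠ l := by
    by_cases h : ∃ t, c < t ∧ g t = l
    · obtain ⟨t, ht, h⟩ := h
      refine ⟨t, ht.le, fun s hs hs' => hs.ne' (hinj (ht.trans hs) ht (hs'.trans h.symm))⟩
    · exact ⟨c, le_rfl, fun t ht h' => h ⟨t, ht, h'⟩⟩
  obtain ⟨d0, hcd, hd0⟩ := hne
  obtain ⟨d, h⟩ := dgt l
  refine ⟨l, max d0 d, hPc _ (hcd.trans (le_max_left _ _)), ?_⟩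
  rcases h with h | h
  · right
    exact ⟨fun t ht => h t ((le_max_right _ _).trans_lt ht), high⟩
  · left
    exact ⟨fun t ht => lt_of_le_of_ne (not_lt.1 (h t ((le_max_right _ _).trans_lt ht)))
      (hd0 t ((le_max_left _ _).trans_lt ht)), low⟩

theorem core (hA : OM L eA) (hB : OM L eB) [TopologicalSpace A] [OrderTopology A]
    [TopologicalSpace B] [OrderTopology B] (g : B → A) (c : B) (l : A)
    (hP : D2 L eA eB (fun x t => c < t ∧ g t = x))
    (hl : ∀ t, c < t → g t < l) (hlim : ∀ y < l, ∃ d, ∀ t, d < t → y < g t) :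
    ∃ (e : A) (d : B) (k : A → B) (k' : B → A), e < l ∧
      D2 L eA eB (fun x t => x ∈ Ioo e l ∧ k x = t) ∧ BijOn k (Ioo e l) (Ioi d) ∧
      ContinuousOn k (Ioo e l) ∧ ContinuousOn k' (Ioi d) ∧
      (∀ x ∈ Ioo e l, k' (k x) = x) ∧ (∀ y ∈ Ioi d, k (k' y) = y) := by
  have : Nonempty B := ⟨c⟩
  have : Nonempty A := ⟨l⟩
  let S : A → Set B := fun y => {s | ∃ x, (c < s ∧ g s = x) ∧ ¬ y < x}
  have memS : ∀ y s, s ∈ S y ↔ c < s ∧ g s ≤ y := by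
    intro y s
    constructor
    · rintro ⟨x, ⟨h1, rfl⟩, h2⟩
      exact ⟨h1, not_lt.1 h2⟩
    · rintro ⟨h1, h2⟩
      exact ⟨g s, ⟨h1, rfl⟩, not_lt.2 h2⟩
  let K : A → B → Prop := fun y t => (∀ s, (∃ x, (c < s ∧ g s = x) ∧ ¬ y < x) → ¬ t < s) ∧
    ∀ u, (∀ s, (∃ x, (c < s ∧ g s = x) ∧ ¬ y < x) → ¬ u < s) → ¬ u < t
  have hK : ∀ y t, K y t ↔ IsLUB (S y) t := by
    intro y t
    simp only [K, not_lt, IsLUB, IsLeast, upperBounds, lowerBounds, S]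
    rfl
  have hKd : D2 L eA eB K := by
    apply Dp.and
    · apply Dp.all eB
      apply Dp.imp
      · apply Dp.ex eA
        exact Dp.and (hP.rel (.var _) (.var _)) (hA.lt.rel (.var _) (.var _)).not
      · exact (hB.lt.rel (.var _) (.var _)).not
    · apply Dp.all eB
      apply Dp.imp
      · apply Dp.all eB
        apply Dp.imp
        · apply Dp.ex eA
          exact Dp.and (hP.rel (.var _) (.var _)) (hA.lt.rel (.var _) (.var _)).not
        · exact (hB.lt.rel (.var _) (.var _)).not
      · exact (hB.lt.rel (.var _) (.var _)).not
  obtain ⟨t0, ht0⟩ := exists_gt c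
  let y0 := g t0
  have hy0 : y0 < l := hl t0 ht0
  have hex : ∀ y, ∃ t, y0 ≤ y → y < l → IsLUB (S y) t := by
    intro y
    by_cases h : y0 ≤ y ∧ y < l
    · have hS : FinUnionPtsItvls (S y) := by
        apply hB.omin
        apply Dp.ex eA
        exact Dp.and (hP.rel (.var _) (.var _)) (hA.lt.rel (.const _) (.var _)).not
      obtain ⟨d, hd⟩ := hlim y h.2
      obtain ⟨t, ht⟩ := sup_ex hS ⟨t0, (memS _ _).2 ⟨ht0, h.1⟩⟩ ⟨d, fun s hs => by
        by_contra hds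
        exact absurd ((memS _ _).1 hs).2 (not_le.2 (hd s (not_le.1 hds)))⟩
      exact ⟨t, fun _ _ => ht⟩
    · exact ⟨c, fun h1 h2 => (h ⟨h1, h2⟩).elim⟩
  choose k hk using hex
  have hKk : ∀ y t, y0 ≤ y → y < l → (K y t ↔ k y = t) := by
    intro y t h1 h2
    rw [hK]
    exact ⟨fun h => (hk y h1 h2).unique h, fun h => h ▸ hk y h1 h2⟩
  have mono : ∀ y z, y0 ≤ y → y ≤ z → z < l → k y ≤ k z := by
    intro y z h1 h2 h3
    refine (hk y h1 (h2.trans_lt h3)).mono (hk z (h1.trans h2) h3) ?_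
    intro s hs
    rw [memS] at hs ⊢
    exact ⟨hs.1, hs.2.trans h2⟩
  have unbdd : ∀ d, ∃ y, y0 ≤ y ∧ y < l ∧ ∀ z, y ≤ z → z < l → d < k z := by
    intro d
    obtain ⟨d1, hd1⟩ := hlim y0 hy0
    obtain ⟨t, ht⟩ := exists_gt (max (max c d) d1)
    have h1 : c < t := ((le_max_left _ _).trans (le_max_left _ _)).trans_lt ht
    have h2 : d < t := ((le_max_right _ _).trans (le_max_left _ _)).trans_lt ht
    have h3 : y0 < g t := hd1 t ((le_max_right _ _).trans_lt ht)
    refine ⟨g t, h3.le, hl t h1, fun z hz hzl => h2.trans_le ?_⟩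
    exact (hk z (h3.le.trans hz) hzl).1 ((memS _ _).2 ⟨h1, hz⟩)
  -- strictly monotone near `l`
  have strict : ∃ e, y0 ≤ e ∧ e < l ∧ StrictMonoOn k (Ioo e l) := by
    have hN : FinUnionPtsItvls {y : A | ∃ y1, ∃ y2, y0 < y1 ∧ y1 < y ∧ y < y2 ∧ y2 < l ∧
        ∃ t, K y1 t ∧ K y2 t} := by
      apply hA.omin
      apply Dp.ex eA
      apply Dp.ex eA
      refine Dp.and (hA.lt.rel (.const _) (.var _)) (Dp.and (hA.lt.rel (.var _) (.var _))
        (Dp.and (hA.lt.rel (.var _) (.var _)) (Dp.and (hA.lt.rel (.var _) (.const _)) ?_)))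
      apply Dp.ex eB
      exact Dp.and (hKd.rel (.var _) (.var _)) (hKd.rel (.var _) (.var _))
    obtain ⟨e, hel, h⟩ := dich_left hN l
    refine ⟨max e y0, le_max_right _ _, max_lt hel hy0, ?_⟩
    rcases h with h | h
    · exfalso
      obtain ⟨y, hy, hyl⟩ := exists_between (max_lt hel hy0)
      have hey : e < y := (le_max_left _ _).trans_lt hy
      have hyy : y0 < y := (le_max_right _ _).trans_lt hy
      have hZ : FinUnionPtsItvls {z : A | ¬ z < y ∧ z < l ∧ K z (k y)} := by
        apply hA.omin
        exact Dp.and (hA.lt.rel (.var _) (.const _)).not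
          (Dp.and (hA.lt.rel (.var _) (.const _)) (hKd.rel (.var _) (.const _)))
      obtain ⟨s, hs⟩ := sup_ex hZ ⟨y, lt_irrefl _, hyl, (hKk _ _ hyy.le hyl).2 rfl⟩
        ⟨l, fun z hz => hz.2.1.le⟩
      have hys : y ≤ s := hs.1 ⟨lt_irrefl _, hyl, (hKk _ _ hyy.le hyl).2 rfl⟩
      have hsl : s < l := by
        obtain ⟨w, hw0, hwl, hw⟩ := unbdd (k y)
        refine lt_of_le_of_lt (hs.2 ?_) hwl
        rintro z ⟨hz1, hz2, hz3⟩
        by_contra hzw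
        have := hw z (not_le.1 hzw).le hz2
        rw [hKk z _ (hyy.le.trans (not_lt.1 hz1)) hz2] at hz3
        exact this.ne' hz3
      obtain ⟨s1, s2, h01, h1s, hs2, h2l, t, hK1, hK2⟩ := h s (hey.trans_le hys) hsl
      rw [hKk _ _ h01.le (h1s.trans hsl)] at hK1
      rw [hKk _ _ (h01.trans (h1s.trans hs2)).le h2l] at hK2
      obtain ⟨z, ⟨hz1, hz2, hz3⟩, hz⟩ := (lt_isLUB_iff hs).1 h1s
      have hzs : z ≤ s := hs.1 ⟨hz1, hz2, hz3⟩
      rw [hKk z _ (hyy.le.trans (not_lt.1 hz1)) hz2] at hz3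
      have e1 : k s1 ≤ k z := mono _ _ h01.le hz.le hz2
      have e2 : k z ≤ k s2 := mono _ _ (h01.trans hz).le (hzs.trans hs2.le) h2l
      have e3 : k s2 = k y := by
        rw [← hz3]; exact le_antisymm (hK2.trans hK1.symm ▸ e1) e2
      have : s2 ≤ s := hs.1 ⟨not_lt.2 (hys.trans hs2.le), h2l,
        (hKk _ _ (h01.trans (h1s.trans hs2)).le h2l).2 e3⟩
      exact absurd hs2 (not_lt.2 this)
    · intro y hy z hz hyz
      have hy0' : y0 < y := (le_max_right _ _).trans_lt hy.1
      refine lt_of_le_of_ne (mono _ _ hy0'.le hyz.le hz.2) fun heq => ?_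
      obtain ⟨m, hm1, hm2⟩ := exists_between hyz
      refine h m (((le_max_left _ _).trans_lt hy.1).trans hm1) (hm2.trans hz.2)
        ⟨y, z, hy0', hm1, hm2, hz.2, k y, (hKk _ _ hy0'.le hy.2).2 rfl,
          (hKk _ _ (hy0'.trans hyz).le hz.2).2 heq.symm⟩
  obtain ⟨e, h0e, hel, hst⟩ := strict
  have hIm : FinUnionPtsItvls {t : B | ∃ y, e < y ∧ y < l ∧ K y t} := by
    apply hB.omin
    apply Dp.ex eA
    exact Dp.and (hA.lt.rel (.const _) (.var _))
      (Dp.and (hA.lt.rel (.var _) (.const _)) (hKd.rel (.var _) (.var _)))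
  have unbdd' : ∀ d, ∃ y ∈ Ioo e l, d < k y := by
    intro d
    obtain ⟨y, _, hyl, h⟩ := unbdd d
    obtain ⟨z, hz, hzl⟩ := exists_between (max_lt hyl hel)
    exact ⟨z, ⟨(le_max_right _ _).trans_lt hz, hzl⟩, h z ((le_max_left _ _).trans_lt hz).le hzl⟩
  obtain ⟨d0, h⟩ := dich_top hIm
  rcases h with h | h
  · obtain ⟨e', he', hd⟩ := unbdd' d0
    have hst' : StrictMonoOn k (Ioo e' l) := hst.mono (Ioo_subset_Ioo_left he'.1.le)
    have him : k '' Ioo e' l = Ioi (k e') := by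
      ext t
      constructor
      · rintro ⟨y, hy, rfl⟩
        exact hst he' ⟨he'.1.trans hy.1, hy.2⟩ hy.1
      · intro ht
        obtain ⟨y, hy1, hy2, hy3⟩ := h t (hd.trans ht)
        rw [hKk _ _ (h0e.trans hy1.le) hy2] at hy3
        subst hy3
        exact ⟨y, ⟨(hst.lt_iff_lt he' ⟨hy1, hy2⟩).1 ht, hy2⟩, rfl⟩
    obtain ⟨k', h1, h2, h3, h4⟩ := homeo (Ioo e' l) (Ioi (k e')) ordConnected_Ioo
      ordConnected_Ioi k hst' him
    refine ⟨e', k e', k, k', he'.2, ?_, ?_, h1, h2, h3, h4⟩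
    · have : (fun x t => x ∈ Ioo e' l ∧ k x = t) = (fun x t => e' < x ∧ x < l ∧ K x t) := by
        funext x t
        refine propext ⟨fun h => ⟨h.1.1, h.1.2, ?_⟩, fun h => ⟨⟨h.1, h.2.1⟩, ?_⟩⟩
        · exact (hKk _ _ (h0e.trans (he'.1.trans h.1.1).le) h.1.2).2 h.2
        · exact (hKk _ _ (h0e.trans (he'.1.trans h.1).le) h.2.1).1 h.2.2
      rw [this]
      exact Dp.and (hA.lt.rel (.const _) (.var _))
        (Dp.and (hA.lt.rel (.var _) (.const _)) (hKd.rel (.var _) (.var _)))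
    · rw [← him]
      exact hst'.injOn.bijOn_image
  · exfalso
    obtain ⟨y, hy, hd⟩ := unbdd' d0
    exact h _ hd ⟨y, hy.1, hy.2, (hKk _ _ (h0e.trans hy.1.le) hy.2).2 rfl⟩

theorem finU_dual {X : Set A} (h : FinUnionPtsItvls X) :
    FinUnionPtsItvls (M := Aᵒᵈ) (OrderDual.ofDual ⁻¹' X) := by
  obtain ⟨k, f, hf, rfl⟩ := h
  refine ⟨k, fun i => OrderDual.ofDual ⁻¹' (f i), fun i => ?_, by simp⟩
  rcases hf i with ⟨x, hx⟩ | ⟨a, b, hx⟩ | ⟨a, hx⟩ | ⟨b, hx⟩ | hx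
  · exact Or.inl ⟨OrderDual.toDual x, by beta_reduce; rw [hx]; rfl⟩
  · refine Or.inr (Or.inl ⟨OrderDual.toDual b, OrderDual.toDual a, ?_⟩)
    beta_reduce; rw [hx]; ext y; exact and_comm
  · refine Or.inr (Or.inr (Or.inr (Or.inl ⟨OrderDual.toDual a, ?_⟩)))
    beta_reduce; rw [hx]; rfl
  · refine Or.inr (Or.inr (Or.inl ⟨OrderDual.toDual b, ?_⟩))
    beta_reduce; rw [hx]; rfl
  · exact Or.inr (Or.inr (Or.inr (Or.inr (by beta_reduce; rw [hx]; rfl))))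

theorem OM.dual (hA : OM L eA) : OM L (OrderDual.ofDual.trans eA) where
  lt := hA.lt.rel (s := fun v => eA.symm (v 1)) (t := fun v : Fin 2 → M => eA.symm (v 0))
    (.var _) (.var _)
  omin X hX := finU_dual (hA.omin (OrderDual.toDual ⁻¹' X) hX)

/-- The half with target end fixed. -/
theorem half (hA : OM L eA) (hB : OM L eB) [TopologicalSpace A] [OrderTopology A]
    [TopologicalSpace B] [OrderTopology B] (J : Set B) (c : B) (hJ : Ioi c ⊆ J)
    (a b : A) (f : A → B)
    (hf : D2 L eA eB (fun x t => x ∈ Ioo a b ∧ f x = t)) (hbij : BijOn f (Ioo a b) J) :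
    ∃ (p q : A) (d : B) (k : A → B) (k' : B → A), p < q ∧
      D2 L eA eB (fun x t => x ∈ Ioo p q ∧ k x = t) ∧ BijOn k (Ioo p q) (Ioi d) ∧
      ContinuousOn k (Ioo p q) ∧ ContinuousOn k' (Ioi d) ∧
      (∀ x ∈ Ioo p q, k' (k x) = x) ∧ (∀ y ∈ Ioi d, k (k' y) = y) := by
  have hg : ∀ t, ∃ x, c < t → x ∈ Ioo a b ∧ f x = t := by
    intro t
    by_cases h : c < t
    · obtain ⟨x, hx, h2⟩ := hbij.surjOn (hJ h)
      exact ⟨x, fun _ => ⟨hx, h2⟩⟩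
    · exact ⟨a, fun h' => (h h').elim⟩
  choose g hg using hg
  have hP : D2 L eA eB (fun x t => c < t ∧ g t = x) := by
    have : (fun x t => c < t ∧ g t = x) = (fun x t => c < t ∧ (x ∈ Ioo a b ∧ f x = t)) := by
      funext x t
      refine propext ⟨fun h => ⟨h.1, ?_⟩, fun h => ⟨h.1, ?_⟩⟩
      · rw [← h.2]; exact hg t h.1
      · exact hbij.injOn (hg t h.1).1 h.2.1 ((hg t h.1).2.trans h.2.2.symm)
    rw [this]
    exact Dp.and (hB.lt.rel (.const _) (.var _)) (hf.rel (.var _) (.var _))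
  obtain ⟨l, c', hP', h | h⟩ := pre hA hB g c a b hP (fun t ht => (hg t ht).1.1)
    (fun t ht => (hg t ht).1.2) (fun s hs t ht h => by
      rw [← (hg s hs).2, ← (hg t ht).2, h])
  · obtain ⟨e, d, k, k', h'⟩ := core hA hB g c' l hP' h.1 h.2
    exact ⟨e, l, d, k, k', h'⟩
  · obtain ⟨e, d, k, k', h0, h1, h2, h3, h4, h5, h6⟩ :=
      core hA.dual hB (OrderDual.toDual ∘ g) c' (OrderDual.toDual l) hP' h.1 h.2
    have hI : (Ioo e (OrderDual.toDual l) : Set Aᵒᵈ) =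
        OrderDual.ofDual ⁻¹' (Ioo l (OrderDual.ofDual e)) := by
      ext y; exact and_comm
    rw [hI] at h1 h2 h3 h5
    exact ⟨l, OrderDual.ofDual e, d, k ∘ OrderDual.toDual, OrderDual.ofDual ∘ k',
      h0, h1, h2, h3, h4, h5, h6⟩

end Core

end OMaux

/-- (In an o-minimal structure, there is a definable bijection between a
bounded interval and an unbounded interval iff there is a definable homeomorphism between
a bounded interval and an unbounded interval). -/
theorem stmt_16 (L : FirstOrder.Language) (M : Type*) [L.Structure M]
    [LinearOrder M] [DenselyOrdered M] [NoMinOrder M] [NoMaxOrder M] [Nonempty M]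
    [TopologicalSpace M] [OrderTopology M]
    (hlt : DefSet L {x : Fin 2 → M | x 0 < x 1})
    (homin : ∀ X : Set M, DefSet1 L X → FinUnionPtsItvls X) :
    (∃ (I J : Set M) (f : M → M), IsBddItvl I ∧ IsUnbddItvl J ∧
      DefFunOn1 L I f ∧ Set.BijOn f I J) ↔
    (∃ (I J : Set M) (f g : M → M), IsBddItvl I ∧ IsUnbddItvl J ∧
      DefFunOn1 L I f ∧ Set.BijOn f I J ∧ ContinuousOn f I ∧ ContinuousOn g J ∧
      (∀ x ∈ I, g (f x) = x) ∧ (∀ y ∈ J, f (g y) = y)) := by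
  constructor
  · rintro ⟨I, J, f, ⟨a, b, hab, rfl⟩, hJ, hf, hbij⟩
    have hM : OMaux.OM L (Equiv.refl M) := ⟨hlt, homin⟩
    have key : (∃ c, Ioi c ⊆ J) ∨ ∃ c, Iio c ⊆ J := by
      rcases hJ with ⟨c, rfl⟩ | ⟨c, rfl⟩ | rfl
      · exact Or.inl ⟨c, subset_rfl⟩
      · exact Or.inr ⟨c, subset_rfl⟩
      · exact Or.inl ⟨a, subset_univ _⟩
    rcases key with ⟨c, hc⟩ | ⟨c, hc⟩
    · obtain ⟨p, q, d, k, k', hpq, h⟩ := OMaux.half hM hM J c hc a b f hf hbij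
      exact ⟨Ioo p q, Ioi d, k, k', ⟨p, q, hpq, rfl⟩, Or.inl ⟨d, rfl⟩, h⟩
    · obtain ⟨p, q, d, k, k', hpq, h⟩ := OMaux.half (B := Mᵒᵈ) hM hM.dual
        (OrderDual.ofDual ⁻¹' J) (OrderDual.toDual c) hc a b (OrderDual.toDual ∘ f) hf hbij
      exact ⟨Ioo p q, Iio (OrderDual.ofDual d), OrderDual.ofDual ∘ k, k' ∘ OrderDual.toDual,
        ⟨p, q, hpq, rfl⟩, Or.inr (Or.inl ⟨_, rfl⟩), h⟩
  · rintro ⟨I, J, f, g, h1, h2, h3, h4, -⟩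
    exact ⟨I, J, f, h1, h2, h3, h4⟩
end

section
/- Let M be an o-minimal densely linearly ordered structure, let a < b in M, and let f : [a,b] × M → M be a definable function; for x ∈ [a,b] write f_x : M → M for f_x(y) = f(x,y), and let π : M² → M be the projection onto the first coordinate. Then there exists a finite partition of [a,b] × M into cells C_1, ..., C_n such that no C_i contains a set of the form {c} × M with c ∈ M, each cell C_i is either (i) the graph {(x, h(x)) : x ∈ D} of a definable continuous function h on a set D that is a single point or an open interval in M, or (ii) a band {(x,y) : x ∈ D, g(x) < y < h(x)} where D is a single point or an open interval and each of g, h is either a definable continuous function on D or the constant −∞ / +∞ respectively, and for each i one of the following holds: the restriction of f_x to the fiber (C_i)_x = {y : (x,y) ∈ C_i} is strictly increasing for every x ∈ π(C_i); this restriction is strictly decreasing for every x ∈ π(C_i); or this restriction is constant for every x ∈ π(C_i). -/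
open FirstOrder Set

section framework

variable {L : FirstOrder.Language} {M : Type*} [L.Structure M]

variable (L) in
def DP {n : ℕ} (P : (Fin n → M) → Prop) : Prop :=
  Set.Definable (Set.univ : Set M) L {v | P v}

variable (L) in
def DF {n : ℕ} (t : (Fin n → M) → M) : Prop :=
  DP L (fun w : Fin (n+1) → M => t (Fin.tail w) = w 0)

variable (L) in
def D1 (P : M → Prop) : Prop := DP L (fun v : Fin 1 → M => P (v 0))
variable (L) in
def D2 (P : M → M → Prop) : Prop := DP L (fun v : Fin 2 → M => P (v 0) (v 1))
variable (L) in
def D3 (P : M → M → M → Prop) : Prop := DP L (fun v : Fin 3 → M => P (v 0) (v 1) (v 2))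
variable (L) in
def F1 (f : M → M) : Prop := D2 L (fun x y => f x = y)
variable (L) in
def F2 (f : M → M → M) : Prop := D3 L (fun x y z => f x y = z)

variable {n : ℕ} {P Q : (Fin n → M) → Prop}

theorem DP.and (hP : DP L P) (hQ : DP L Q) : DP L (fun v => P v ∧ Q v) := hP.inter hQ
theorem DP.or (hP : DP L P) (hQ : DP L Q) : DP L (fun v => P v ∨ Q v) := hP.union hQ
theorem DP.not (hP : DP L P) : DP L (fun v => ¬ P v) := hP.compl
theorem DP.imp (hP : DP L P) (hQ : DP L Q) : DP L (fun v => P v → Q v) := by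
  have := hP.not.or hQ
  simpa only [imp_iff_not_or] using this
theorem DP.iff (hP : DP L P) (hQ : DP L Q) : DP L (fun v => P v ↔ Q v) := by
  have := (hP.imp hQ).and (hQ.imp hP)
  simpa only [iff_iff_implies_and_implies] using this
theorem DP.prop (p : Prop) : DP L (fun _ : Fin n → M => p) := by
  by_cases hp : p
  · have : {v : Fin n → M | p} = Set.univ := by ext; simp [hp]
    unfold DP; rw [this]; exact Set.definable_univ
  · have : {v : Fin n → M | p} = ∅ := by ext; simp [hp]
    unfold DP; rw [this]; exact Set.definable_empty
theorem DP.ex {P : (Fin n → M) → M → Prop}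
    (hP : DP L (fun w : Fin (n+1) → M => P (Fin.tail w) (w 0))) :
    DP L (fun v => ∃ y, P v y) := by
  have := Set.Definable.image_comp hP (Fin.succ : Fin n → Fin (n+1))
  have e : {v | ∃ y, P v y} = (fun g : Fin (n+1) → M => g ∘ Fin.succ) ''
      {w : Fin (n+1) → M | P (Fin.tail w) (w 0)} := by
    ext v
    constructor
    · rintro ⟨y, hy⟩
      exact ⟨Fin.cons y v, by simpa using hy, by ext i; simp⟩
    · rintro ⟨w, hw, rfl⟩
      exact ⟨w 0, hw⟩
  unfold DP
  rw [e]; exact this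
theorem DP.all {P : (Fin n → M) → M → Prop}
    (hP : DP L (fun w : Fin (n+1) → M => P (Fin.tail w) (w 0))) :
    DP L (fun v => ∀ y, P v y) := by
  have := (DP.ex (P := fun v y => ¬ P v y) hP.not).not
  simpa only [not_exists, not_not] using this
theorem DP.ren {m : ℕ} (hP : DP L P) (f : Fin n → Fin m) :
    DP L (fun w : Fin m → M => P (fun i => w (f i))) := Set.Definable.preimage_comp f hP
theorem DP.subst {P : (Fin n → M) → M → Prop} {s : (Fin n → M) → M} (hs : DF L s)
    (hP : DP L (fun w : Fin (n+1) → M => P (Fin.tail w) (w 0))) :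
    DP L (fun v => P v (s v)) := by
  have := DP.ex (P := fun v y => s v = y ∧ P v y) (hs.and hP)
  simpa using this
theorem DP.eqv (i j : Fin n) : DP L (fun v : Fin n → M => v i = v j) := by
  refine ⟨FirstOrder.Language.Term.equal (FirstOrder.Language.Term.var i) (FirstOrder.Language.Term.var j), ?_⟩
  ext v; simp [FirstOrder.Language.Formula.realize_equal]
theorem DP.eqc (i : Fin n) (c : M) : DP L (fun v : Fin n → M => c = v i) := by
  refine ⟨FirstOrder.Language.Term.equal (FirstOrder.Language.Constants.term (L.con (⟨c, trivial⟩ : (Set.univ : Set M)))) (FirstOrder.Language.Term.var i), ?_⟩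
  ext v; simp [FirstOrder.Language.Formula.realize_equal]
theorem DF.var (i : Fin n) : DF L (fun v : Fin n → M => v i) := DP.eqv (i.succ) 0
theorem DF.const (c : M) : DF L (fun _ : Fin n → M => c) := DP.eqc 0 c
theorem DF.tail {t : (Fin n → M) → M} (ht : DF L t) :
    DF L (fun w : Fin (n+1) → M => t (Fin.tail w)) := by
  have := DP.ren ht (m := n+2) (Fin.cons 0 (fun i => i.succ.succ))
  exact this
theorem D1.comp {P : M → Prop} (hP : D1 L P) {s : (Fin n → M) → M} (hs : DF L s) :
    DP L (fun v => P (s v)) :=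
  DP.subst (P := fun _ y => P y) hs (DP.ren hP ![0])
theorem D2.comp {P : M → M → Prop} (hP : D2 L P) {s t : (Fin n → M) → M} (hs : DF L s)
    (ht : DF L t) : DP L (fun v => P (s v) (t v)) := by
  refine DP.subst (P := fun v y => P y (t v)) hs ?_
  refine DP.subst (P := fun (w : Fin (n+1) → M) y => P (w 0) y) ht.tail ?_
  exact DP.ren hP ![1, 0]
theorem D3.comp {P : M → M → M → Prop} (hP : D3 L P) {s t r : (Fin n → M) → M} (hs : DF L s)
    (ht : DF L t) (hr : DF L r) : DP L (fun v => P (s v) (t v) (r v)) := by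
  refine DP.subst (P := fun v y => P y (t v) (r v)) hs ?_
  refine DP.subst (P := fun (w : Fin (n+1) → M) y => P (w 0) y (r (Fin.tail w))) ht.tail ?_
  refine DP.subst (P := fun (w : Fin (n+2) → M) y => P (w 1) (w 0) y) hr.tail.tail ?_
  exact DP.ren hP ![2, 1, 0]
theorem DP.eq {s t : (Fin n → M) → M} (hs : DF L s) (ht : DF L t) :
    DP L (fun v => s v = t v) := by
  have : D2 L (fun x y : M => x = y) := DP.eqv 0 1
  exact this.comp hs ht
theorem F1.comp {f : M → M} (hf : F1 L f) {s : (Fin n → M) → M} (hs : DF L s) :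
    DF L (fun v => f (s v)) := D2.comp hf hs.tail (DF.var 0)
theorem F2.comp {f : M → M → M} (hf : F2 L f) {s t : (Fin n → M) → M} (hs : DF L s)
    (ht : DF L t) : DF L (fun v => f (s v) (t v)) := D3.comp hf hs.tail ht.tail (DF.var 0)

/-- Total definable selection for functional relations. -/
theorem exists_F1 {R : M → M → Prop} (hR : D2 L R) (hu : ∀ x y z, R x y → R x z → y = z) :
    ∃ g : M → M, F1 L g ∧ ∀ x, (∃ y, R x y) → R x (g x) := by
  classical
  refine ⟨fun x => if h : ∃ y, R x y then h.choose else x, ?_, ?_⟩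
  · have : D2 L (fun x y => R x y ∨ ((¬ ∃ z, R x z) ∧ x = y)) := by
      refine DP.or hR (DP.and (DP.not (DP.ex ?_)) (DP.eq (DF.var _) (DF.var _)))
      exact hR.comp (DF.var _) (DF.var _)
    have e : (fun x y => R x y ∨ ((¬ ∃ z, R x z) ∧ x = y)) =
        (fun x y => (if h : ∃ y, R x y then h.choose else x) = y) := by
      ext x y
      split_ifs with h
      · constructor
        · rintro (h1 | h1)
          · exact hu _ _ _ h.choose_spec h1
          · exact absurd h h1.1
        · rintro rfl
          exact Or.inl h.choose_spec
      · constructor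
        · rintro (h1 | h1)
          · exact absurd ⟨_, h1⟩ h
          · exact h1.2
        · rintro rfl
          exact Or.inr ⟨h, rfl⟩
    unfold F1
    rw [← e]; exact this
  · intro x h
    simp only [dif_pos h]
    exact h.choose_spec

end framework

open Filter Topology

set_option linter.unusedSectionVars false

section omin

variable {L : FirstOrder.Language} {M : Type*} [L.Structure M]
    [LinearOrder M] [DenselyOrdered M] [NoMinOrder M] [NoMaxOrder M]
    [TopologicalSpace M] [OrderTopology M]

variable (L M) in
structure OMin : Prop where
  lt : D2 L (fun x y : M => x < y)
  om : ∀ P : M → Prop, D1 L P → FinUnionPtsItvls {x | P x}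

variable {n : ℕ}

theorem DP.lt (hO : OMin L M) {s t : (Fin n → M) → M} (hs : DF L s) (ht : DF L t) :
    DP L (fun v => s v < t v) := hO.lt.comp hs ht

theorem DP.le (hO : OMin L M) {s t : (Fin n → M) → M} (hs : DF L s) (ht : DF L t) :
    DP L (fun v => s v ≤ t v) := by
  have := (DP.lt hO ht hs).not
  simpa only [not_lt] using this

theorem ev_iff (x : M) (P : M → Prop) :
    (∀ᶠ y in 𝓝 x, P y) ↔ ∃ u v, u < x ∧ x < v ∧ ∀ y, u < y → y < v → P y := by
  rw [Filter.Eventually, mem_nhds_iff_exists_Ioo_subset]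
  constructor
  · rintro ⟨u, v, h, h2⟩
    exact ⟨u, v, h.1, h.2, fun y h3 h4 => h2 ⟨h3, h4⟩⟩
  · rintro ⟨u, v, h, h', h2⟩
    exact ⟨u, v, ⟨h, h'⟩, fun y h3 => h2 y h3.1 h3.2⟩

theorem evr_iff (x : M) (P : M → Prop) :
    (∀ᶠ y in 𝓝[>] x, P y) ↔ ∃ v, x < v ∧ ∀ y, x < y → y < v → P y := by
  rw [Filter.Eventually, mem_nhdsGT_iff_exists_Ioo_subset]
  constructor
  · rintro ⟨v, h, h2⟩
    exact ⟨v, h, fun y h3 h4 => h2 ⟨h3, h4⟩⟩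
  · rintro ⟨v, h', h2⟩
    exact ⟨v, h', fun y h3 => h2 y h3.1 h3.2⟩

theorem evl_iff (x : M) (P : M → Prop) :
    (∀ᶠ y in 𝓝[<] x, P y) ↔ ∃ v, v < x ∧ ∀ y, v < y → y < x → P y := by
  rw [Filter.Eventually, mem_nhdsLT_iff_exists_Ioo_subset]
  constructor
  · rintro ⟨v, h, h2⟩
    exact ⟨v, h, fun y h3 h4 => h2 ⟨h3, h4⟩⟩
  · rintro ⟨v, h', h2⟩
    exact ⟨v, h', fun y h3 => h2 y h3.1 h3.2⟩

theorem DP.ev (hO : OMin L M) {s : (Fin n → M) → M} {P : (Fin n → M) → M → Prop} (hs : DF L s)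
    (hP : DP L (fun w : Fin (n+1) → M => P (Fin.tail w) (w 0))) :
    DP L (fun v => ∀ᶠ y in 𝓝 (s v), P v y) := by
  simp only [ev_iff]
  refine DP.ex (DP.ex (DP.and ?_ (DP.and ?_ (DP.all (DP.imp ?_ (DP.imp ?_ ?_))))))
  · exact DP.lt hO (DF.var _) hs.tail.tail
  · exact DP.lt hO hs.tail.tail (DF.var _)
  · exact DP.lt hO (DF.var 2) (DF.var 0)
  · exact DP.lt hO (DF.var 0) (DF.var 1)
  · exact hP.ren (m := n+3) (Fin.cons 0 (fun i => i.succ.succ.succ))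

theorem DP.evr (hO : OMin L M) {s : (Fin n → M) → M} {P : (Fin n → M) → M → Prop} (hs : DF L s)
    (hP : DP L (fun w : Fin (n+1) → M => P (Fin.tail w) (w 0))) :
    DP L (fun v => ∀ᶠ y in 𝓝[>] (s v), P v y) := by
  simp only [evr_iff]
  refine DP.ex (DP.and ?_ (DP.all (DP.imp ?_ (DP.imp ?_ ?_))))
  · exact DP.lt hO hs.tail (DF.var _)
  · exact DP.lt hO hs.tail.tail (DF.var 0)
  · exact DP.lt hO (DF.var 0) (DF.var 1)
  · exact hP.ren (m := n+2) (Fin.cons 0 (fun i => i.succ.succ))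

theorem pieces_conn {s : Set M} (h : (∃ x, s = {x}) ∨ IsOpenItvl s) : s.OrdConnected := by
  rcases h with ⟨x, rfl⟩ | ⟨a, b, rfl⟩ | ⟨a, rfl⟩ | ⟨a, rfl⟩ | rfl <;> infer_instance

theorem pieces_lub {s : Set M} (h : (∃ x, s = {x}) ∨ IsOpenItvl s) (hb : BddAbove s) :
    s = ∅ ∨ ∃ c, IsLUB s c := by
  rcases h with ⟨x, rfl⟩ | ⟨a, b, rfl⟩ | ⟨a, rfl⟩ | ⟨a, rfl⟩ | rfl
  · exact Or.inr ⟨x, isLUB_singleton⟩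
  · rcases lt_or_ge a b with h | h
    · exact Or.inr ⟨b, isLUB_Ioo h⟩
    · exact Or.inl (Set.Ioo_eq_empty (not_lt.2 h))
  · exact absurd hb (not_bddAbove_Ioi a)
  · exact Or.inr ⟨a, isLUB_Iio⟩
  · rcases isEmpty_or_nonempty M with h | h
    · left; exact Set.eq_empty_of_isEmpty _
    · exact absurd hb (not_bddAbove_univ)

theorem OMin.interval (hO : OMin L M) {P : M → Prop} (hP : D1 L P) (hi : {x | P x}.Infinite) :
    ∃ u v, u < v ∧ ∀ x, u < x → x < v → P x := by
  obtain ⟨k, f, hf, he⟩ := hO.om P hP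
  have : ∃ i, (f i).Infinite := by
    by_contra hc
    simp only [not_exists, Set.not_infinite] at hc
    exact hi (he ▸ Set.finite_iUnion hc)
  obtain ⟨i, hi⟩ := this
  obtain ⟨x, hx, y, hy, hxy⟩ := hi.nontrivial.exists_lt
  refine ⟨x, y, hxy, fun z h1 h2 => ?_⟩
  have hz : z ∈ f i := (pieces_conn (hf i)).out hx hy ⟨h1.le, h2.le⟩
  have : z ∈ {x | P x} := he ▸ Set.mem_iUnion.2 ⟨i, hz⟩
  exact this

theorem conn_germ {s : Set M} (hs : s.OrdConnected) (x : M) :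
    (∀ᶠ y in 𝓝[>] x, y ∈ s) ∨ (∀ᶠ y in 𝓝[>] x, y ∉ s) := by
  by_contra hc
  rw [not_or] at hc
  obtain ⟨h1, h2⟩ := hc
  replace h2 : ∃ᶠ y in 𝓝[>] x, y ∈ s := h2
  apply h1
  obtain ⟨y0, hy0, hx⟩ := (h2.and_eventually self_mem_nhdsWithin).exists
  rw [evr_iff]
  refine ⟨y0, hx, fun y h3 h4 => ?_⟩
  have h5 : ∀ᶠ z in 𝓝[>] x, z < y := (evr_iff _ _).2 ⟨y, h3, fun z _ h => h⟩
  obtain ⟨z, hz, hzy⟩ := (h2.and_eventually h5).exists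
  exact hs.out hz hy0 ⟨hzy.le, h4.le⟩

theorem conn_germl {s : Set M} (hs : s.OrdConnected) (x : M) :
    (∀ᶠ y in 𝓝[<] x, y ∈ s) ∨ (∀ᶠ y in 𝓝[<] x, y ∉ s) := by
  by_contra hc
  rw [not_or] at hc
  obtain ⟨h1, h2⟩ := hc
  replace h2 : ∃ᶠ y in 𝓝[<] x, y ∈ s := h2
  apply h1
  obtain ⟨y0, hy0, hx⟩ := (h2.and_eventually self_mem_nhdsWithin).exists
  rw [evl_iff]
  refine ⟨y0, hx, fun y h3 h4 => ?_⟩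
  have h5 : ∀ᶠ z in 𝓝[<] x, y < z := (evl_iff _ _).2 ⟨y, h4, fun z h _ => h⟩
  obtain ⟨z, hz, hzy⟩ := (h2.and_eventually h5).exists
  exact hs.out hy0 hz ⟨h3.le, hzy.le⟩

theorem germ_union {k : ℕ} {f : Fin k → Set M} {l : Filter M}
    (h : ∀ i, (∀ᶠ y in l, y ∈ f i) ∨ (∀ᶠ y in l, y ∉ f i)) :
    (∀ᶠ y in l, y ∈ ⋃ i, f i) ∨ (∀ᶠ y in l, y ∉ ⋃ i, f i) := by
  by_cases hc : ∃ i, ∀ᶠ y in l, y ∈ f i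
  · obtain ⟨i, hi⟩ := hc
    exact Or.inl (hi.mono fun y hy => Set.mem_iUnion.2 ⟨i, hy⟩)
  · right
    have : ∀ i, ∀ᶠ y in l, y ∉ f i := fun i => (h i).resolve_left (fun h' => hc ⟨i, h'⟩)
    filter_upwards [eventually_all.2 this] with y hy
    simpa using hy

theorem OMin.germ (hO : OMin L M) {P : M → Prop} (hP : D1 L P) (x : M) :
    (∀ᶠ y in 𝓝[>] x, P y) ∨ (∀ᶠ y in 𝓝[>] x, ¬ P y) := by
  obtain ⟨k, f, hf, he⟩ := hO.om P hP
  have e : ∀ y, P y ↔ y ∈ ⋃ i, f i := fun y => by rw [← he]; rfl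
  simp only [e]
  exact germ_union (fun i => conn_germ (pieces_conn (hf i)) x)

theorem OMin.germl (hO : OMin L M) {P : M → Prop} (hP : D1 L P) (x : M) :
    (∀ᶠ y in 𝓝[<] x, P y) ∨ (∀ᶠ y in 𝓝[<] x, ¬ P y) := by
  obtain ⟨k, f, hf, he⟩ := hO.om P hP
  have e : ∀ y, P y ↔ y ∈ ⋃ i, f i := fun y => by rw [← he]; rfl
  simp only [e]
  exact germ_union (fun i => conn_germl (pieces_conn (hf i)) x)

theorem OMin.lub (hO : OMin L M) {P : M → Prop} (hP : D1 L P) (hne : ∃ x, P x)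
    (hb : BddAbove {x | P x}) : ∃ c, IsLUB {x | P x} c := by
  obtain ⟨k, f, hf, he⟩ := hO.om P hP
  rw [he] at hb
  have key : ∀ I : Finset (Fin k), (⋃ i ∈ I, f i) = ∅ ∨ ∃ c, IsLUB (⋃ i ∈ I, f i) c := by
    intro I
    induction I using Finset.induction_on with
    | empty => left; simp
    | insert i I hi ih =>
      rw [Finset.set_biUnion_insert]
      rcases pieces_lub (hf i) (hb.mono (Set.subset_iUnion f i)) with h | ⟨c, hc⟩
      · rw [h, Set.empty_union]; exact ih
      · rcases ih with h | ⟨d, hd⟩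
        · rw [h, Set.union_empty]; exact Or.inr ⟨c, hc⟩
        · exact Or.inr ⟨_, hc.union hd⟩
  have h := key Finset.univ
  simp only [Finset.mem_univ, Set.iUnion_true] at h
  rw [← he] at h
  rcases h with h | h
  · obtain ⟨x, hx⟩ := hne
    have : x ∈ {x | P x} := hx
    rw [h] at this
    exact absurd this (Set.notMem_empty _)
  · exact h

/-- Definable connectedness of closed intervals. -/
theorem OMin.conn (hO : OMin L M) {P : M → Prop} (hP : D1 L P) {c d : M} (hcd : c ≤ d)
    (h : ∀ z, c ≤ z → z ≤ d → ∀ᶠ z' in 𝓝 z, (P z' ↔ P z)) (hc : P c) : P d := by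
  have hD : D1 L (fun z => c ≤ z ∧ z ≤ d ∧ ∀ w, c ≤ w → w ≤ z → P w) := by
    unfold D1
    repeat' first
      | exact DF.var _ | exact DF.const _ | apply DP.all | apply DP.and | apply DP.imp
      | apply DP.le hO | apply hP.comp
  obtain ⟨s, hs⟩ := hO.lub hD ⟨c, le_rfl, hcd, fun w h1 h2 => by rwa [le_antisymm h2 h1]⟩
    ⟨d, fun z hz => hz.2.1⟩
  have hcs : c ≤ s := hs.1 ⟨le_rfl, hcd, fun w h1 h2 => by rwa [le_antisymm h2 h1]⟩
  have hsd : s ≤ d := hs.2 (fun z hz => hz.2.1)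
  obtain ⟨u, v, hu, hv, hw⟩ := (ev_iff _ _).1 (h s hcs hsd)
  obtain ⟨z, hz, huz⟩ : ∃ z, (c ≤ z ∧ z ≤ d ∧ ∀ w, c ≤ w → w ≤ z → P w) ∧ u < z := by
    by_contra hcon
    push Not at hcon
    exact absurd (hs.2 (fun z hz => hcon z hz)) (not_le.2 hu)
  have hzs : z ≤ s := hs.1 hz
  have hPs : P s := (hw z huz (lt_of_le_of_lt hzs hv)).1 (hz.2.2 z hz.1 le_rfl)
  have hall : ∀ w, c ≤ w → w < v → P w := by
    intro w h1 h2
    rcases le_or_gt w z with h3 | h3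
    · exact hz.2.2 w h1 h3
    · exact (hw w (huz.trans h3) h2).2 hPs
  rcases hsd.eq_or_lt with h1 | h1
  · rw [← h1]; exact hPs
  · exfalso
    obtain ⟨e, he1, he2⟩ := exists_between (lt_min hv h1)
    have : e ≤ s := hs.1 ⟨hcs.trans he1.le, (he2.trans_le (min_le_right _ _)).le,
      fun w h1 h2 => hall w h1 (h2.trans_lt (he2.trans_le (min_le_left _ _)))⟩
    exact absurd this (not_le.2 he1)

theorem OMin.cof (hO : OMin L M) {P : M → Prop} (hP : D1 L P)
    (h : ∀ u v, u < v → ∃ x, u < x ∧ x < v ∧ P x) : ∀ᶠ x in cofinite, P x := by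
  rw [Filter.eventually_cofinite]
  by_contra hc
  obtain ⟨u, v, huv, h1⟩ := hO.interval (P := fun x => ¬ P x) hP.not hc
  obtain ⟨x, h2, h3, h4⟩ := h u v huv
  exact h1 x h2 h3 h4

theorem cof_exists {P : M → Prop} (h : ∀ᶠ x in cofinite, P x) {u v : M} (huv : u < v) :
    ∃ x, u < x ∧ x < v ∧ P x := by
  by_contra hc
  push Not at hc
  exact (Set.Ioo_infinite huv) (Set.Finite.subset h (fun x hx => hc x hx.1 hx.2))

/-- Definable predicates are locally constant off a finite set. -/
theorem OMin.locconst (hO : OMin L M) {P : M → Prop} (hP : D1 L P) :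
    ∀ᶠ x in cofinite, (∀ᶠ x' in 𝓝 x, P x') ∨ (∀ᶠ x' in 𝓝 x, ¬ P x') := by
  apply hO.cof
  · unfold D1
    repeat' first
      | exact DF.var _ | apply DP.or | apply DP.ev hO | apply DP.not | apply hP.comp
  · intro u v huv
    rcases hO.germ hP u with h | h <;>
    · obtain ⟨w, hw, h⟩ := (evr_iff _ _).1 h
      obtain ⟨x, hx1, hx2⟩ := exists_between (lt_min huv hw)
      refine ⟨x, hx1, hx2.trans_le (min_le_left _ _), ?_⟩
      first
      | exact Or.inl ((ev_iff _ _).2 ⟨u, w, hx1, hx2.trans_le (min_le_right _ _), h⟩)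
      | exact Or.inr ((ev_iff _ _).2 ⟨u, w, hx1, hx2.trans_le (min_le_right _ _), h⟩)

end omin

section mono

variable {L : FirstOrder.Language} {M : Type*} [L.Structure M]
    [LinearOrder M] [DenselyOrdered M] [NoMinOrder M] [NoMaxOrder M]
    [TopologicalSpace M] [OrderTopology M]

theorem OMin.unif (hO : OMin L M) {T : M → M → Prop} (hT : D2 L T)
    (htr : ∀ x y z, T x y → T y z → T x z) {u v : M} (huv : u < v)
    (h : ∀ x, u < x → x < v → ∀ᶠ y in 𝓝[>] x, T x y) :
    ∃ u' v', u ≤ u' ∧ u' < v' ∧ v' ≤ v ∧ ∀ x y, u' < x → x < y → y < v' → T x y := by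
  by_contra hc
  set N : M → M → Prop := fun d x => u < x ∧ x < d ∧ ∀ y, x < y → y ≤ d → T x y with hN
  have hND : D2 L N := by
    unfold D2
    repeat' first
      | exact DF.var _ | exact DF.const _ | apply DP.and | apply DP.all | apply DP.imp
      | apply DP.lt hO | apply DP.le hO | apply hT.comp
  have hfin : ∀ d, d < v → {x | N d x}.Finite := by
    intro d hd
    by_contra hi
    have hD : D1 L (N d) := hND.comp (DF.const d) (DF.var 0)
    obtain ⟨p, q, hpq, h1⟩ := hO.interval hD hi
    obtain ⟨r, hr1, hr2⟩ := exists_between hpq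
    obtain ⟨r', hr3, hr4⟩ := exists_between hr2
    have a1 := h1 r hr1 hr2
    have a2 := h1 r' (hr1.trans hr3) hr4
    refine hc ⟨r, r', a1.1.le, hr3, (a2.2.1.trans hd).le, fun x y h2 h3 h4 => ?_⟩
    have a3 := h1 x (hr1.trans h2) ((h3.trans h4).trans hr4)
    exact a3.2.2 y h3 (h4.trans a2.2.1).le
  obtain ⟨x, hux, hxv⟩ := exists_between huv
  have hE : D1 L (fun y => ∀ q, x < q → q < y → ¬ N y q) := by
    unfold D1
    repeat' first
      | exact DF.var _ | exact DF.const _ | apply DP.all | apply DP.not | apply hND.comp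
      | apply DP.imp | apply DP.lt hO 
  rcases hO.germ hE x with hg | hg
  · obtain ⟨w, hw, hg⟩ := (evr_iff _ _).1 hg
    obtain ⟨y, hy1, hy2⟩ := exists_between (lt_min hw hxv)
    obtain ⟨w', hw', hg'⟩ := (evr_iff _ _).1 (h y (hux.trans hy1) (hy2.trans_le (min_le_right _ _)))
    obtain ⟨y', hy'1, hy'2⟩ := exists_between (lt_min hw' (hy2.trans_le (min_le_left _ _)))
    exact hg y' (hy1.trans hy'1) (hy'2.trans_le (min_le_right _ _)) y hy1 hy'1
      ⟨hux.trans hy1, hy'1, fun z h1 h2 =>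
        hg' z h1 (h2.trans_lt (hy'2.trans_le (min_le_left _ _)))⟩
  · obtain ⟨w, hw, hg⟩ := (evr_iff _ _).1 hg
    obtain ⟨y, hy1, hy2⟩ := exists_between (lt_min hw hxv)
    have hyw := hy2.trans_le (min_le_left _ _)
    have hyv := hy2.trans_le (min_le_right _ _)
    have hSf : {q | x < q ∧ (N y q ∨ q = y)}.Finite := by
      refine ((hfin y hyv).union (Set.finite_singleton y)).subset ?_
      rintro q ⟨_, h1 | h1⟩
      · exact Or.inl h1
      · exact Or.inr h1
    obtain ⟨y0, hy0, hmin⟩ := Set.exists_min_image _ id hSf ⟨y, hy1, Or.inr rfl⟩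
    have hy0y : y0 ≤ y := hmin y ⟨hy1, Or.inr rfl⟩
    apply hg y0 hy0.1 (hy0y.trans_lt hyw)
    intro q hxq hqy hNq
    have : N y q := by
      refine ⟨hNq.1, hqy.trans_le hy0y, fun z h1 h2 => ?_⟩
      rcases le_or_gt z y0 with h3 | h3
      · exact hNq.2.2 z h1 h3
      · rcases hy0.2 with h4 | h4
        · exact htr _ _ _ (hNq.2.2 y0 hqy le_rfl) (h4.2.2 z h3 h2)
        · exact absurd h2 (not_le.2 (h4 ▸ h3))
    exact absurd (hmin q ⟨hxq, Or.inl this⟩) (not_le.2 hqy)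

def Ty (t : Fin 3) (x y : M) : Prop := ![x < y, x = y, y < x] t

theorem Ty.trans (t : Fin 3) (x y z : M) : Ty t x y → Ty t y z → Ty t x z := by
  fin_cases t
  · exact lt_trans
  · exact Eq.trans
  · exact fun h1 h2 => lt_trans h2 h1

theorem Ty.def (hO : OMin L M) (t : Fin 3) : D2 L (Ty (M := M) t) := by
  fin_cases t
  · exact DP.lt hO (DF.var 0) (DF.var 1)
  · exact DP.eqv 0 1
  · exact DP.lt hO (DF.var 1) (DF.var 0)

theorem Ty.uniq {s t : Fin 3} {x y : M} : Ty s x y → Ty t x y → s = t := by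
  intro h1 h2
  fin_cases s <;> fin_cases t <;> first
    | rfl
    | (exfalso; simp [Ty] at h1 h2; order)

def LocT (F : M → M) (t : Fin 3) (y : M) : Prop :=
  ∃ u v, u < y ∧ y < v ∧ ∀ y1 y2, u < y1 → y1 < y2 → y2 < v → Ty t (F y1) (F y2)

theorem exists_ty (hO : OMin L M) {F : M → M} (hF : F1 L F) {u v : M} (huv : u < v) :
    ∃ t u' v', u ≤ u' ∧ u' < v' ∧ v' ≤ v ∧
      ∀ x y, u' < x → x < y → y < v' → Ty t (F x) (F y) := by
  have hR : ∀ t, D1 L (fun x => ∀ᶠ y in 𝓝[>] x, Ty t (F x) (F y)) := fun t =>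
    DP.evr hO (DF.var _) ((Ty.def hO t).comp (hF.comp (DF.var 1)) (hF.comp (DF.var 0)))
  have hex : ∀ x, ∃ t, ∀ᶠ y in 𝓝[>] x, Ty t (F x) (F y) := by
    intro x
    have g : ∀ t, _ := fun t => hO.germ (P := fun y => Ty t (F x) (F y))
      ((Ty.def hO t).comp (DF.const _) (hF.comp (DF.var 0))) x
    by_contra hc
    push Not at hc
    have g' : ∀ t, ∀ᶠ y in 𝓝[>] x, ¬ Ty t (F x) (F y) := fun t =>
      (g t).resolve_left (by simpa using hc t)
    obtain ⟨y, hy⟩ := (eventually_all.2 g').exists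
    rcases lt_trichotomy (F x) (F y) with h | h | h
    · exact hy 0 h
    · exact hy 1 h
    · exact hy 2 h
  obtain ⟨x, hx1, hx2, hx⟩ := cof_exists (eventually_all.2 fun t => hO.locconst (hR t)) huv
  obtain ⟨t, ht⟩ := hex x
  have := (hx t).resolve_right (fun h => h.self_of_nhds ht)
  obtain ⟨p, q, hp, hq, h⟩ := (ev_iff _ _).1 this
  have h2 : max u p < min v q := (max_lt hx1 hp).trans (lt_min hx2 hq)
  obtain ⟨u', v', h3, h4, h5, h6⟩ := hO.unif (T := fun x y => Ty t (F x) (F y))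
    ((Ty.def hO t).comp (hF.comp (DF.var 0)) (hF.comp (DF.var 1)))
    (fun _ _ _ => Ty.trans t _ _ _) h2
    (fun z hz1 hz2 => h z ((le_max_right _ _).trans_lt hz1) (hz2.trans_le (min_le_right _ _)))
  exact ⟨t, u', v', (le_max_left _ _).trans h3, h4, h5.trans (min_le_left _ _), h6⟩

theorem LocT.def2 (hO : OMin L M) {f : M → M → M} (hf : F2 L f) (t : Fin 3) :
    D2 L (fun x y => LocT (f x) t y) := by
  have hT := Ty.def hO (M := M) t
  unfold D2 LocT
  repeat' first
      | exact DF.var _ | apply DP.ex | apply DP.all | apply DP.and | apply hT.comp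
      | apply DP.imp | apply DP.lt hO | apply hf.comp

theorem locT_cof (hO : OMin L M) {F : M → M} (hF : F1 L F) :
    ∀ᶠ y in cofinite, LocT F 0 y ∨ LocT F 1 y ∨ LocT F 2 y := by
  apply hO.cof
  · have h : F2 L (fun _ : M => F) := DP.eq (hF.comp (DF.var 1)) (DF.var 2)
    have h' : ∀ t, D1 L (fun y => LocT F t y) := fun t =>
      (LocT.def2 hO h t).comp (DF.var 0) (DF.var 0)
    exact DP.or (h' 0) (DP.or (h' 1) (h' 2))
  · intro u v huv
    obtain ⟨t, u', v', h1, h2, h3, h4⟩ := exists_ty hO hF huv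
    obtain ⟨y, hy1, hy2⟩ := exists_between h2
    have : LocT F t y := ⟨u', v', hy1, hy2, h4⟩
    refine ⟨y, h1.trans_lt hy1, hy2.trans_le h3, ?_⟩
    fin_cases t
    · exact Or.inl this
    · exact Or.inr (Or.inl this)
    · exact Or.inr (Or.inr this)

theorem continuousAt_iff' {F : M → M} {x : M} : ContinuousAt F x ↔
    (∀ a, a < F x → ∀ᶠ y in 𝓝 x, a < F y) ∧ (∀ a, F x < a → ∀ᶠ y in 𝓝 x, F y < a) := by
  unfold ContinuousAt; rw [tendsto_order]

theorem cont_cof (hO : OMin L M) {F : M → M} (hF : F1 L F) :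
    ∀ᶠ x in cofinite, ContinuousAt F x := by
  apply hO.cof
  · change D1 L (fun x => ContinuousAt F x)
    simp only [continuousAt_iff']
    unfold D1
    repeat' first
      | exact DF.var _ | apply DP.all | apply DP.and
      | apply DP.imp | apply DP.lt hO | apply hF.comp | apply DP.ev hO
  · intro u v huv
    obtain ⟨t, u', v', h1, h2, h3, h4⟩ := exists_ty hO hF huv
    suffices ∃ x, u' < x ∧ x < v' ∧ ContinuousAt F x by
      obtain ⟨x, a1, a2, a3⟩ := this
      exact ⟨x, h1.trans_lt a1, a2.trans_le h3, a3⟩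
    by_cases ht : t = 1
    · subst ht
      obtain ⟨x, hx1, hx2⟩ := exists_between h2
      refine ⟨x, hx1, hx2, ?_⟩
      have : ∀ᶠ y in 𝓝 x, F y = F x := (ev_iff _ _).2 ⟨u', v', hx1, hx2, fun y h5 h6 => by
        rcases lt_trichotomy x y with h | h | h
        · exact (h4 x y hx1 h h6).symm
        · rw [h]
        · exact h4 y x h5 h hx2⟩
      rw [continuousAt_congr this]
      exact continuousAt_const
    · have hinj : Set.InjOn F (Set.Ioo u' v') := by
        intro x hx y hy hxy
        by_contra hne
        rcases lt_or_gt_of_ne hne with h | h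
        · exact ht (Ty.uniq (h4 x y hx.1 h hy.2) (show Ty 1 (F x) (F y) from hxy))
        · exact ht (Ty.uniq (h4 y x hy.1 h hx.2) (show Ty 1 (F y) (F x) from hxy.symm))
      have hinf : {z | ∃ y, u' < y ∧ y < v' ∧ F y = z}.Infinite := by
        refine ((Set.Ioo_infinite h2).image hinj).mono ?_
        rintro z ⟨y, hy, rfl⟩
        exact ⟨y, hy.1, hy.2, rfl⟩
      have hD : D1 L (fun z => ∃ y, u' < y ∧ y < v' ∧ F y = z) := by
        unfold D1
        repeat' first
          | exact DF.var _ | exact DF.const _ | apply DP.ex | apply DP.and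
          | apply DP.lt hO | apply hF.comp | apply DP.eq
      obtain ⟨p, q, hpq, h5⟩ := hO.interval hD hinf
      obtain ⟨z, hz1, hz2⟩ := exists_between hpq
      obtain ⟨x, hx1, hx2, rfl⟩ := h5 z hz1 hz2
      refine ⟨x, hx1, hx2, continuousAt_iff'.2 ⟨fun a ha => ?_, fun a ha => ?_⟩⟩
      · obtain ⟨z, hz3, hz4⟩ := exists_between (max_lt ha hz1)
        obtain ⟨w, hw1, hw2, rfl⟩ := h5 z ((le_max_right _ _).trans_lt hz3) (hz4.trans hz2)
        have ha' := (le_max_left _ _).trans_lt hz3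
        rw [ev_iff]
        have hne : w ≠ x := by rintro rfl; exact lt_irrefl _ hz4
        fin_cases t
        · have hwx : w < x := by
            by_contra hc
            have : F x < F w := h4 x w hx1 (lt_of_le_of_ne (not_lt.1 hc) hne.symm) hw2
            order
          exact ⟨w, v', hwx, hx2, fun y a1 a2 => ha'.trans (h4 w y hw1 a1 a2)⟩
        · exact absurd rfl ht
        · have hwx : x < w := by
            by_contra hc
            have : F x < F w := h4 w x hw1 (lt_of_le_of_ne (not_lt.1 hc) hne) hx2
            order
          exact ⟨u', w, hx1, hwx, fun y a1 a2 => ha'.trans (h4 y w a1 a2 hw2)⟩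
      · obtain ⟨z, hz3, hz4⟩ := exists_between (lt_min ha hz2)
        obtain ⟨w, hw1, hw2, rfl⟩ := h5 z (hz1.trans hz3) (hz4.trans_le (min_le_right _ _))
        have ha' := hz4.trans_le (min_le_left _ _)
        rw [ev_iff]
        have hne : w ≠ x := by rintro rfl; exact lt_irrefl _ hz3
        fin_cases t
        · have hwx : x < w := by
            by_contra hc
            have : F w < F x := h4 w x hw1 (lt_of_le_of_ne (not_lt.1 hc) hne) hx2
            order
          exact ⟨u', w, hx1, hwx, fun y a1 a2 => lt_trans (h4 y w a1 a2 hw2) ha'⟩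
        · exact absurd rfl ht
        · have hwx : w < x := by
            by_contra hc
            have : F w < F x := h4 x w hx1 (lt_of_le_of_ne (not_lt.1 hc) hne.symm) hw2
            order
          exact ⟨w, v', hwx, hx2, fun y a1 a2 => lt_trans (h4 w y hw1 a1 a2) ha'⟩

/-- Local to global on intervals. -/
theorem locT_global (hO : OMin L M) {F : M → M} (hF : F1 L F) {t : Fin 3} {y1 y2 : M}
    (h12 : y1 < y2) (h : ∀ y, y1 ≤ y → y ≤ y2 → LocT F t y) : Ty t (F y1) (F y2) := by
  have hT := Ty.def hO (M := M) t
  have hD : D1 L (fun z => ∀ w, y1 < w → w ≤ z → Ty t (F y1) (F w)) := by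
    unfold D1
    repeat' first
      | exact DF.var _ | exact DF.const _ | apply DP.all
      | apply DP.lt hO | apply DP.le hO | apply hF.comp | apply hT.comp | apply DP.imp
  refine hO.conn hD h12.le ?_ (fun w a b => absurd a (not_lt.2 b)) y2 h12 le_rfl
  intro z hz1 hz2
  obtain ⟨u, v, hu, hv, hl⟩ := h z hz1 hz2
  have key : ∀ z' z'', u < z' → z' ≤ z'' → z'' < v →
      (∀ w, y1 < w → w ≤ z' → Ty t (F y1) (F w)) → (∀ w, y1 < w → w ≤ z'' → Ty t (F y1) (F w)) := by
    intro z' z'' a1 a2 a3 a4 w a5 a6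
    rcases le_or_gt w z' with h | h
    · exact a4 w a5 h
    · rcases lt_or_ge y1 z' with h' | h'
      · exact Ty.trans t _ _ _ (a4 z' h' le_rfl) (hl z' w a1 h (a6.trans_lt a3))
      · exact hl y1 w (a1.trans_le h') a5 (a6.trans_lt a3)
  refine (ev_iff _ _).2 ⟨u, v, hu, hv, fun z' a1 a2 => ?_⟩
  rcases le_total z' z with h | h
  · exact ⟨key z' z a1 h hv, fun a w b c => a w b (c.trans h)⟩
  · exact ⟨fun a w b c => a w b (c.trans h), key z z' hu h a2⟩

theorem LocT.ev {F : M → M} {t : Fin 3} {y : M} (h : LocT F t y) : ∀ᶠ y' in 𝓝 y, LocT F t y' := by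
  obtain ⟨u, v, hu, hv, h⟩ := h
  exact (ev_iff _ _).2 ⟨u, v, hu, hv, fun y' a b => ⟨u, v, a, b, h⟩⟩

theorem LocT.uniq {F : M → M} {s t : Fin 3} {y : M} (h : LocT F t y) (h' : LocT F s y) : s = t := by
  obtain ⟨u, v, hu, hv, h⟩ := h
  obtain ⟨u', v', hu', hv', h'⟩ := h'
  obtain ⟨z, hz1, hz2⟩ := exists_between (lt_min hv hv')
  exact Ty.uniq (h' y z hu' hz1 (hz2.trans_le (min_le_right _ _)))
    (h y z hu hz1 (hz2.trans_le (min_le_left _ _)))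

/-- The type is constant on an interval all of whose points have a type. -/
theorem locT_const (hO : OMin L M) {F : M → M} (hF : F1 L F) {t : Fin 3} {y1 y2 : M}
    (h12 : y1 ≤ y2) (h : ∀ y, y1 ≤ y → y ≤ y2 → LocT F 0 y ∨ LocT F 1 y ∨ LocT F 2 y) :
    LocT F t y1 ↔ LocT F t y2 := by
  have h0 : F2 L (fun _ : M => F) := DP.eq (hF.comp (DF.var 1)) (DF.var 2)
  have hD : D1 L (fun y => LocT F t y) := (LocT.def2 hO h0 t).comp (DF.var 0) (DF.var 0)
  have hl : ∀ z, y1 ≤ z → z ≤ y2 → ∀ᶠ z' in 𝓝 z, (LocT F t z' ↔ LocT F t z) := by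
    intro z h1 h2
    obtain ⟨s, hs⟩ : ∃ s, LocT F s z := by
      rcases h z h1 h2 with h | h | h
      exacts [⟨_, h⟩, ⟨_, h⟩, ⟨_, h⟩]
    filter_upwards [hs.ev] with z' hz'
    constructor
    · intro a
      rwa [hz'.uniq a]
    · intro a
      rwa [hs.uniq a]
  constructor
  · exact hO.conn hD h12 hl
  · intro a
    by_contra hc
    refine hO.conn (P := fun y => ¬ LocT F t y) hD.not h12 (fun z h1 h2 => ?_) hc a
    filter_upwards [hl z h1 h2] with z' hz'
    rw [hz']

end mono

section unifin

variable {L : FirstOrder.Language} {M : Type*} [L.Structure M]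
    [LinearOrder M] [DenselyOrdered M] [NoMinOrder M] [NoMaxOrder M]
    [TopologicalSpace M] [OrderTopology M]

theorem exists_minF (hO : OMin L M) {B : M → M → Prop} (hB : D2 L B) (hf : ∀ x, {y | B x y}.Finite) :
    ∃ σ : M → M, F1 L σ ∧ ∀ x, (∃ y, B x y) → B x (σ x) ∧ ∀ y, B x y → σ x ≤ y := by
  obtain ⟨σ, h1, h2⟩ := exists_F1 (R := fun x z => B x z ∧ ∀ y, B x y → z ≤ y) (L := L)
    (by
      unfold D2
      repeat' first
        | exact DF.var _ | apply DP.and | apply DP.all | apply DP.imp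
        | apply hB.comp | apply DP.le hO)
    (fun x y z hy hz => le_antisymm (hy.2 z hz.1) (hz.2 y hy.1))
  refine ⟨σ, h1, fun x hx => h2 x ?_⟩
  obtain ⟨y, hy, hm⟩ := Set.exists_min_image _ id (hf x) hx
  exact ⟨y, hy, hm⟩

theorem exists_maxF (hO : OMin L M) {B : M → M → Prop} (hB : D2 L B) (hf : ∀ x, {y | B x y}.Finite) :
    ∃ σ : M → M, F1 L σ ∧ ∀ x, (∃ y, B x y) → B x (σ x) ∧ ∀ y, B x y → y ≤ σ x := by
  obtain ⟨σ, h1, h2⟩ := exists_F1 (R := fun x z => B x z ∧ ∀ y, B x y → y ≤ z) (L := L)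
    (by
      unfold D2
      repeat' first
        | exact DF.var _ | apply DP.and | apply DP.all | apply DP.imp
        | apply hB.comp | apply DP.le hO)
    (fun x y z hy hz => le_antisymm (hz.2 y hy.1) (hy.2 z hz.1))
  refine ⟨σ, h1, fun x hx => h2 x ?_⟩
  obtain ⟨y, hy, hm⟩ := Set.exists_max_image _ id (hf x) hx
  exact ⟨y, hy, hm⟩

variable {A : M → M → Prop}

theorem next_free (hO : OMin L M) (hA : D2 L A) (hf : ∀ x, {y | A x y}.Finite) {g : M → M}
    (hg : F1 L g) : ∀ᶠ x0 in cofinite, ∃ s, g x0 < s ∧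
      ∀ᶠ x in 𝓝 x0, ∀ y, g x < y → y < s → ¬ A x y := by
  have hB : D2 L (fun x y => g x < y ∧ A x y) :=
    DP.and (DP.lt hO (hg.comp (DF.var 0)) (DF.var 1)) hA
  obtain ⟨σ, hσ, h⟩ := exists_minF hO hB (fun x => (hf x).subset (fun y hy => hy.2))
  have hE : D1 L (fun x => ∃ y, g x < y ∧ A x y) := DP.ex (hB.comp (DF.var 1) (DF.var 0))
  filter_upwards [cont_cof hO hσ, hO.locconst hE] with x0 h1 h2
  rcases h2 with h2 | h2
  · obtain ⟨s, hs1, hs2⟩ := exists_between (h x0 h2.self_of_nhds).1.1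
    refine ⟨s, hs1, ?_⟩
    filter_upwards [h2, (continuousAt_iff'.1 h1).1 s hs2] with x a1 a2 y a3 a4 a5
    exact absurd ((h x a1).2 y ⟨a3, a5⟩) (not_le.2 (a4.trans a2))
  · obtain ⟨s, hs⟩ := exists_gt (g x0)
    refine ⟨s, hs, ?_⟩
    filter_upwards [h2] with x a1 y a3 _ a5
    exact a1 ⟨y, a3, a5⟩

theorem prev_free (hO : OMin L M) (hA : D2 L A) (hf : ∀ x, {y | A x y}.Finite) {g : M → M}
    (hg : F1 L g) : ∀ᶠ x0 in cofinite, ∃ s, s < g x0 ∧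
      ∀ᶠ x in 𝓝 x0, ∀ y, y < g x → s < y → ¬ A x y := by
  have hB : D2 L (fun x y => y < g x ∧ A x y) :=
    DP.and (DP.lt hO (DF.var 1) (hg.comp (DF.var 0))) hA
  obtain ⟨σ, hσ, h⟩ := exists_maxF hO hB (fun x => (hf x).subset (fun y hy => hy.2))
  have hE : D1 L (fun x => ∃ y, y < g x ∧ A x y) := DP.ex (hB.comp (DF.var 1) (DF.var 0))
  filter_upwards [cont_cof hO hσ, hO.locconst hE] with x0 h1 h2
  rcases h2 with h2 | h2
  · obtain ⟨s, hs1, hs2⟩ := exists_between (h x0 h2.self_of_nhds).1.1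
    refine ⟨s, hs2, ?_⟩
    filter_upwards [h2, (continuousAt_iff'.1 h1).2 s hs1] with x a1 a2 y a3 a4 a5
    exact absurd ((h x a1).2 y ⟨a3, a5⟩) (not_le.2 (a2.trans a4))
  · obtain ⟨s, hs⟩ := exists_lt (g x0)
    refine ⟨s, hs, ?_⟩
    filter_upwards [h2] with x a1 y a3 _ a5
    exact a1 ⟨y, a3, a5⟩

theorem low_free (hO : OMin L M) (hA : D2 L A) (hf : ∀ x, {y | A x y}.Finite) :
    ∀ᶠ x0 in cofinite, ∃ s, ∀ᶠ x in 𝓝 x0, ∀ y, y < s → ¬ A x y := by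
  obtain ⟨σ, hσ, h⟩ := exists_minF hO hA hf
  have hE : D1 L (fun x => ∃ y, A x y) := DP.ex (hA.comp (DF.var 1) (DF.var 0))
  filter_upwards [cont_cof hO hσ, hO.locconst hE] with x0 h1 h2
  obtain ⟨s, hs⟩ := exists_lt (σ x0)
  refine ⟨s, ?_⟩
  rcases h2 with h2 | h2
  · filter_upwards [h2, (continuousAt_iff'.1 h1).1 s hs] with x a1 a2 y a3 a4
    exact absurd ((h x a1).2 y a4) (not_le.2 (a3.trans a2))
  · filter_upwards [h2] with x a1 y _ a5
    exact a1 ⟨y, a5⟩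

theorem high_free (hO : OMin L M) (hA : D2 L A) (hf : ∀ x, {y | A x y}.Finite) :
    ∀ᶠ x0 in cofinite, ∃ s, ∀ᶠ x in 𝓝 x0, ∀ y, s < y → ¬ A x y := by
  obtain ⟨σ, hσ, h⟩ := exists_maxF hO hA hf
  have hE : D1 L (fun x => ∃ y, A x y) := DP.ex (hA.comp (DF.var 1) (DF.var 0))
  filter_upwards [cont_cof hO hσ, hO.locconst hE] with x0 h1 h2
  obtain ⟨s, hs⟩ := exists_gt (σ x0)
  refine ⟨s, ?_⟩
  rcases h2 with h2 | h2
  · filter_upwards [h2, (continuousAt_iff'.1 h1).2 s hs] with x a1 a2 y a3 a4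
    exact absurd ((h x a1).2 y a4) (not_le.2 (a2.trans a3))
  · filter_upwards [h2] with x a1 y _ a5
    exact a1 ⟨y, a5⟩

def FreeAt (A : M → M → Prop) (x0 y0 : M) : Prop :=
  ∃ u v, u < y0 ∧ y0 < v ∧ ∀ᶠ x in 𝓝 x0, ∀ y, u < y → y < v → ¬ A x y

def OneAt (A : M → M → Prop) (x0 y0 : M) : Prop :=
  (∃ u v, u < y0 ∧ y0 < v ∧ ∀ᶠ x in 𝓝 x0, ∀ y z, u < y → y < v → u < z → z < v →
    A x y → A x z → y = z) ∧
  (∀ u v, u < y0 → y0 < v → ∀ᶠ x in 𝓝 x0, ∃ y, u < y ∧ y < v ∧ A x y)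

def NormalAt (A : M → M → Prop) (x0 y0 : M) : Prop :=
  FreeAt A x0 y0 ∨ (A x0 y0 ∧ OneAt A x0 y0)

theorem NormalAt.def (hO : OMin L M) (hA : D2 L A) : D2 L (NormalAt A) := by
  unfold D2 NormalAt FreeAt OneAt
  repeat' first
    | exact DF.var _ | apply DP.ex | apply DP.all | apply DP.and | apply DP.or | apply DP.ev hO
    | apply hA.comp | apply DP.not | apply DP.imp | apply DP.lt hO | apply DP.eq

theorem normal_cof (hO : OMin L M) (hA : D2 L A) (hf : ∀ x, {y | A x y}.Finite) :
    ∀ᶠ x in cofinite, ∀ y, NormalAt A x y := by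
  have hN := NormalAt.def hO hA
  have hL : D2 L (fun x y => ∀ z, z ≤ y → NormalAt A x z) := by
    unfold D2
    repeat' first
      | exact DF.var _ | apply DP.all | apply DP.imp | apply DP.le hO | apply hN.comp
  obtain ⟨β, hβ, hβ2⟩ := exists_F1 (L := L)
    (R := fun x b => IsLUB {y | ∀ z, z ≤ y → NormalAt A x z} b) (by
      simp only [IsLUB, IsLeast, mem_upperBounds, lowerBounds, Set.mem_setOf_eq]
      unfold D2
      repeat' first
        | exact DF.var _ | apply DP.and | apply hL.comp | apply DP.all | apply DP.imp
        | apply DP.le hO)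
    (fun x y z hy hz => hy.unique hz)
  have hAβ : D1 L (fun x => A x (β x)) := hA.comp (DF.var 0) (hβ.comp (DF.var 0))
  rw [Filter.eventually_cofinite]
  by_contra hinf
  have hD : D1 L (fun x => ¬ ∀ y, NormalAt A x y) :=
    DP.not (DP.all (hN.comp (DF.var 1) (DF.var 0)))
  obtain ⟨u, v, huv, hbad⟩ := hO.interval hD hinf
  have hcof := (cont_cof hO hβ).and ((next_free hO hA hf hβ).and ((prev_free hO hA hf hβ).and
    ((low_free hO hA hf).and (hO.locconst hAβ))))
  obtain ⟨x0, hx1, hx2, hcont, ⟨s, hs, hs2⟩, ⟨p, hp, hp2⟩, ⟨l, hl⟩, hlc⟩ := cof_exists hcof huv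
  have hb := hbad x0 hx1 hx2
  push Not at hb
  obtain ⟨yb, hyb⟩ := hb
  have hne : ∃ y, ∀ z, z ≤ y → NormalAt A x0 z := by
    obtain ⟨y, hy⟩ := exists_lt l
    refine ⟨y, fun z hz => Or.inl ?_⟩
    obtain ⟨w, hw⟩ := exists_lt z
    refine ⟨w, l, hw, hz.trans_lt hy, ?_⟩
    filter_upwards [hl] with x hx y _ h2
    exact hx y h2
  have hlub := hβ2 x0 (hO.lub (P := fun y => ∀ z, z ≤ y → NormalAt A x0 z)
    (hL.comp (DF.const x0) (DF.var 0)) hne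
    ⟨yb, fun y hy => le_of_not_gt fun h => hyb (hy yb h.le)⟩)
  have key : ∀ y, p < y → y < s → NormalAt A x0 y := by
    intro y hpy hys
    rcases lt_trichotomy y (β x0) with h | h | h
    · obtain ⟨w, hw1, hw2⟩ := exists_between h
      refine Or.inl ⟨p, w, hpy, hw1, ?_⟩
      filter_upwards [hp2, (continuousAt_iff'.1 hcont).1 w hw2] with x a1 a2 z a3 a4
      exact a1 z (a4.trans a2) a3
    · subst h
      rcases hlc with hlc | hlc
      · refine Or.inr ⟨hlc.self_of_nhds, ⟨p, s, hp, hs, ?_⟩, fun u' v' h1 h2 => ?_⟩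
        · have : ∀ᶠ x in 𝓝 x0, ∀ y, p < y → y < s → A x y → y = β x := by
            filter_upwards [hs2, hp2] with x a1 a2 y a3 a4 a5
            rcases lt_trichotomy y (β x) with h | h | h
            · exact absurd a5 (a2 y h a3)
            · exact h
            · exact absurd a5 (a1 y h a4)
          filter_upwards [this] with x hx y z a1 a2 a3 a4 a5 a6
          rw [hx y a1 a2 a5, hx z a3 a4 a6]
        · filter_upwards [hlc, (continuousAt_iff'.1 hcont).1 u' h1,
            (continuousAt_iff'.1 hcont).2 v' h2] with x a1 a2 a3
          exact ⟨β x, a2, a3, a1⟩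
      · refine Or.inl ⟨p, s, hp, hs, ?_⟩
        filter_upwards [hs2, hp2, hlc] with x a1 a2 a6 y a3 a4 a5
        rcases lt_trichotomy y (β x) with h | h | h
        · exact a2 y h a3 a5
        · exact a6 (h ▸ a5)
        · exact a1 y h a4 a5
    · obtain ⟨w, hw1, hw2⟩ := exists_between h
      refine Or.inl ⟨w, s, hw2, hys, ?_⟩
      filter_upwards [hs2, (continuousAt_iff'.1 hcont).2 w hw1] with x a1 a2 z a3 a4
      exact a1 z (a2.trans a3) a4
  obtain ⟨y, hy, hpy⟩ : ∃ y, (∀ z, z ≤ y → NormalAt A x0 z) ∧ p < y := by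
    by_contra hcon
    push Not at hcon
    exact absurd (hlub.2 (fun z hz => hcon z hz)) (not_le.2 hp)
  obtain ⟨w, hw1, hw2⟩ := exists_between hs
  have : w ≤ β x0 := hlub.1 (fun z hz => by
    rcases le_or_gt z y with h | h
    · exact hy z h
    · exact key z (hpy.trans h) (hz.trans_lt hw2))
  exact absurd this (not_le.2 hw1)

/-- At least `n` points of the fiber lie above `y`. -/
def Above (A : M → M → Prop) : ℕ → M → M → Prop
  | 0, _, _ => True
  | n+1, x, y => ∃ z, y < z ∧ A x z ∧ Above A n x z

theorem Above.def (hO : OMin L M) (hA : D2 L A) (n : ℕ) : D2 L (Above A n) := by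
  induction n with
  | zero => exact DP.prop True
  | succ n ih =>
    unfold D2
    simp only [Above]
    repeat' first
      | exact DF.var _ | apply DP.ex | apply DP.and | apply DP.lt hO | apply hA.comp
      | apply ih.comp

theorem Above.mono {n : ℕ} {x y z : M} (h : Above A n x y) (hz : z ≤ y) : Above A n x z := by
  cases n with
  | zero => trivial
  | succ n =>
    obtain ⟨w, h1, h2⟩ := h
    exact ⟨w, hz.trans_lt h1, h2⟩

theorem Above.fin {x : M} (hf : {y | A x y}.Finite) : ∃ n, ∀ y, ¬ Above A n x y := by
  have key : ∀ n y, Above A n x y → ∃ s : Finset M, s.card = n ∧ ∀ z ∈ s, y < z ∧ A x z := by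
    intro n
    induction n with
    | zero => exact fun y _ => ⟨∅, rfl, by simp⟩
    | succ n ih =>
      rintro y ⟨z, h1, h2, h3⟩
      obtain ⟨s, hs, h4⟩ := ih z h3
      refine ⟨insert z s, ?_, ?_⟩
      · rw [Finset.card_insert_of_notMem (fun h => lt_irrefl _ (h4 z h).1), hs]
      · intro w hw
        rcases Finset.mem_insert.1 hw with rfl | hw
        · exact ⟨h1, h2⟩
        · exact ⟨h1.trans (h4 w hw).1, (h4 w hw).2⟩
  refine ⟨hf.toFinset.card + 1, fun y hy => ?_⟩
  obtain ⟨s, hs, h⟩ := key _ y hy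
  have : s ⊆ hf.toFinset := fun z hz => by simpa using (h z hz).2
  have := Finset.card_le_card this
  omega

theorem free_compact (hO : OMin L M) (hA : D2 L A) {x0 c d : M} (hcd : c ≤ d)
    (h : ∀ y, c ≤ y → y ≤ d → FreeAt A x0 y) :
    ∀ᶠ x in 𝓝 x0, ∀ y, c ≤ y → y ≤ d → ¬ A x y := by
  have hD : D1 L (fun z => ∀ᶠ x in 𝓝 x0, ∀ y, c ≤ y → y ≤ z → ¬ A x y) := by
    unfold D1
    repeat' first
      | exact DF.var _ | exact DF.const _ | apply DP.all | apply DP.ev hO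
      | apply hA.comp | apply DP.not | apply DP.imp | apply DP.le hO
  refine hO.conn hD hcd ?_ ?_
  · intro z hz1 hz2
    obtain ⟨u, v, hu, hv, hl⟩ := h z hz1 hz2
    have key : ∀ z' z'', u < z' → z'' < v →
      (∀ᶠ x in 𝓝 x0, ∀ y, c ≤ y → y ≤ z' → ¬ A x y) →
      (∀ᶠ x in 𝓝 x0, ∀ y, c ≤ y → y ≤ z'' → ¬ A x y) := by
      intro z' z'' a1 a2 a3
      filter_upwards [a3, hl] with x b1 b2 y b3 b4
      rcases le_or_gt y z' with h | h
      · exact b1 y b3 h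
      · exact b2 y (a1.trans h) (b4.trans_lt a2)
    exact (ev_iff _ _).2 ⟨u, v, hu, hv, fun z' a1 a2 => ⟨key z' z a1 hv, key z z' hu a2⟩⟩
  · obtain ⟨u, v, hu, hv, hl⟩ := h c le_rfl hcd
    filter_upwards [hl] with x b2 y b3 b4
    exact b2 y (hu.trans_le b3) (b4.trans_lt hv)

theorem above_loc (hO : OMin L M) (hA : D2 L A) (hf : ∀ x, {y | A x y}.Finite) {x0 : M}
    (hN : ∀ y, NormalAt A x0 y) (hh : ∃ s, ∀ᶠ x in 𝓝 x0, ∀ y, s < y → ¬ A x y) (n : ℕ) :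
    ∀ y0, ¬ A x0 y0 → ∀ᶠ x in 𝓝 x0, (Above A n x y0 ↔ Above A n x0 y0) := by
  have hfree : ∀ y, ¬ A x0 y → FreeAt A x0 y := fun y hy =>
    (hN y).resolve_right (fun h => hy h.1)
  induction n with
  | zero => exact fun y _ => Eventually.of_forall fun x => Iff.rfl
  | succ n ih =>
    intro y0 hy0
    by_cases hex : ∃ y, y0 < y ∧ A x0 y
    · obtain ⟨y1, ⟨hy01, hy1⟩, hmin⟩ := Set.exists_min_image {y | y0 < y ∧ A x0 y} id
        ((hf x0).subset fun y hy => hy.2) hex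
      have hone : OneAt A x0 y1 := by
        rcases hN y1 with h | h
        · obtain ⟨u, v, hu, hv, h⟩ := h
          exact absurd hy1 (h.self_of_nhds y1 hu hv)
        · exact h.2
      obtain ⟨⟨u, v, hu, hv, huniq⟩, hlsc⟩ := hone
      obtain ⟨u', hu'1, hu'2⟩ := exists_between (max_lt hy01 hu)
      obtain ⟨v', hv'1, hv'2⟩ := exists_between hv
      have hy0u := (le_max_left _ _).trans_lt hu'1
      have huu := (le_max_right _ _).trans_lt hu'1
      have hv' : ¬ A x0 v' := fun h => hv'1.ne
        (huniq.self_of_nhds y1 v' hu hv (hu.trans hv'1) hv'2 hy1 h)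
      obtain ⟨p, q, hp, hq, hvf⟩ := hfree v' hv'
      have hc := free_compact hO hA (x0 := x0) hy0u.le (fun y a1 a2 => hfree y fun h => by
        rcases a1.eq_or_lt with h' | h'
        · exact hy0 (h' ▸ h)
        · exact absurd (hmin y ⟨h', h⟩) (not_le.2 (a2.trans_lt hu'2)))
      have hall : ∀ᶠ x in 𝓝 x0, (Above A (n+1) x y0 ↔ Above A n x v') := by
        filter_upwards [hc, hvf, huniq, hlsc u' v' hu'2 hv'1] with x a1 a2 a3 a4
        obtain ⟨w, hw1, hw2, hw3⟩ := a4
        have hxv : ¬ A x v' := a2 v' hp hq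
        constructor
        · rintro ⟨z, hz1, hz2, hz3⟩
          have hz4 : u' < z := lt_of_not_ge fun h => a1 z hz1.le h hz2
          rcases le_or_gt v' z with h | h
          · exact hz3.mono h
          · cases n with
            | zero => trivial
            | succ n =>
              obtain ⟨r, hr1, hr2, hr3⟩ := hz3
              refine ⟨r, ?_, hr2, hr3⟩
              by_contra hc
              rcases (not_lt.1 hc).eq_or_lt with h5 | h5
              · exact hxv (h5 ▸ hr2)
              · exact hr1.ne (a3 z r (huu.trans hz4) (h.trans hv'2)
                  ((huu.trans hz4).trans hr1) (h5.trans hv'2) hz2 hr2)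
        · intro h
          exact ⟨w, hy0u.trans hw1, hw3, h.mono hw2.le⟩
      filter_upwards [hall, ih v' hv'] with x b1 b2
      rw [b1, b2, hall.self_of_nhds]
    · have hno : ∀ᶠ x in 𝓝 x0, ∀ y, y0 < y → ¬ A x y := by
        obtain ⟨s, hs⟩ := hh
        have hc := free_compact hO hA (x0 := x0) (le_max_left y0 s) (fun y a1 a2 => hfree y fun h => by
          rcases a1.eq_or_lt with h' | h'
          · exact hy0 (h' ▸ h)
          · exact hex ⟨y, h', h⟩)
        filter_upwards [hs, hc] with x b1 b2 y b3
        rcases le_or_gt y (max y0 s) with h | h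
        · exact b2 y b3.le h
        · exact b1 y ((le_max_right _ _).trans_lt h)
      filter_upwards [hno] with x hx
      constructor
      · rintro ⟨z, hz1, hz2, _⟩
        exact absurd hz2 (hx z hz1)
      · rintro ⟨z, hz1, hz2, _⟩
        exact absurd ⟨z, hz1, hz2⟩ hex

def GoodX (A : M → M → Prop) (x0 : M) : Prop := (∀ y, NormalAt A x0 y) ∧
    (∃ s, ∀ᶠ x in 𝓝 x0, ∀ y, s < y → ¬ A x y) ∧ (∃ s, ∀ᶠ x in 𝓝 x0, ∀ y, y < s → ¬ A x y)

theorem good_loc (hO : OMin L M) (hA : D2 L A) (hf : ∀ x, {y | A x y}.Finite) {x0 : M}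
    (hG : GoodX A x0) (n : ℕ) :
    ∀ᶠ x in 𝓝 x0, ((∃ y, Above A n x y) ↔ ∃ y, Above A n x0 y) := by
  obtain ⟨hN, hh, s, hs⟩ := hG
  obtain ⟨y0, hy0⟩ := exists_lt s
  have h1 := above_loc hO hA hf hN hh n y0 (hs.self_of_nhds y0 hy0)
  have h2 : ∀ᶠ x in 𝓝 x0, ((∃ y, Above A n x y) ↔ Above A n x y0) := by
    filter_upwards [hs] with x hx
    refine ⟨?_, fun h => ⟨_, h⟩⟩
    rintro ⟨y, hy⟩
    cases n with
    | zero => trivial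
    | succ n =>
      obtain ⟨z, hz1, hz2, hz3⟩ := hy
      exact ⟨z, lt_of_lt_of_le hy0 (not_lt.1 fun h => hx z h hz2), hz2, hz3⟩
  filter_upwards [h1, h2] with x a1 a2
  rw [a2, a1, h2.self_of_nhds]

theorem good_interval (hO : OMin L M) (hA : D2 L A) (hf : ∀ x, {y | A x y}.Finite) {u v : M}
    (hG : ∀ x, u < x → x < v → GoodX A x) :
    ∃ n, ∀ x, u < x → x < v → ∀ y, ¬ Above A n x y := by
  by_cases huv : u < v
  · obtain ⟨x0, h1, h2⟩ := exists_between huv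
    obtain ⟨n, hn⟩ := Above.fin (hf x0)
    refine ⟨n, fun x h3 h4 y hy => ?_⟩
    have hD : D1 L (fun x => ∃ y, Above A n x y) :=
      DP.ex ((Above.def hO hA n).comp (DF.var 1) (DF.var 0))
    rcases le_total x x0 with h | h
    · obtain ⟨z, hz⟩ := hO.conn hD h (fun z a1 a2 =>
        good_loc hO hA hf (hG z (h3.trans_le a1) (a2.trans_lt h2)) n) ⟨y, hy⟩
      exact hn z hz
    · refine hO.conn (P := fun x => ¬ ∃ y, Above A n x y) hD.not h (fun z a1 a2 => ?_)
        (by simpa using hn) ⟨y, hy⟩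
      filter_upwards [good_loc hO hA hf (hG z (h1.trans_le a1) (a2.trans_lt h4)) n] with w hw
      rw [hw]
  · exact ⟨0, fun x h1 h2 => absurd (h1.trans h2) huv⟩

/-- Splitting an interval along a cofinite condition. -/
theorem split_Ioo {Q : Set M → Prop} (hU : ∀ s t, Disjoint s t → Q s → Q t → Q (s ∪ t)) {u v : M}
    (hpt : ∀ x, u < x → x < v → Q {x}) {R : M → Prop} (hR : ∀ᶠ x in cofinite, R x)
    (hI : ∀ u' v', u ≤ u' → v' ≤ v → (∀ x, u' < x → x < v' → R x) → Q (Set.Ioo u' v')) :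
    Q (Set.Ioo u v) := by
  classical
  have key : ∀ F : Finset M, ∀ u' v', u ≤ u' → v' ≤ v →
      (∀ x, u' < x → x < v' → x ∉ F → R x) → Q (Set.Ioo u' v') := by
    intro F
    induction F using Finset.induction_on with
    | empty => exact fun u' v' h1 h2 h3 => hI u' v' h1 h2 (fun x a b => h3 x a b (by simp))
    | insert c F hc ih =>
      intro u' v' h1 h2 h3
      by_cases hcm : u' < c ∧ c < v'
      · have e : Set.Ioo u' v' = (Set.Ioo u' c ∪ {c}) ∪ Set.Ioo c v' := by
          ext x
          simp only [Set.mem_Ioo, Set.mem_union, Set.mem_singleton_iff]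
          constructor
          · rintro ⟨a1, a2⟩
            rcases lt_trichotomy x c with h | h | h
            · exact Or.inl (Or.inl ⟨a1, h⟩)
            · exact Or.inl (Or.inr h)
            · exact Or.inr ⟨h, a2⟩
          · rintro ((h | h) | h)
            · exact ⟨h.1, h.2.trans hcm.2⟩
            · exact h ▸ hcm
            · exact ⟨hcm.1.trans h.1, h.2⟩
        rw [e]
        refine hU _ _ ?_ (hU _ _ ?_ ?_ ?_) ?_
        · rw [Set.disjoint_left]
          rintro x (h | h) h'
          · exact lt_asymm h.2 h'.1
          · exact h'.1.ne h.symm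
        · rw [Set.disjoint_left]
          rintro x h h'
          exact h.2.ne h'
        · refine ih _ _ h1 (hcm.2.le.trans h2) (fun x a b d => h3 x a (b.trans hcm.2) ?_)
          simp [b.ne, d]
        · exact hpt c (h1.trans_lt hcm.1) (hcm.2.trans_le h2)
        · refine ih _ _ (h1.trans hcm.1.le) h2 (fun x a b d => h3 x (hcm.1.trans a) b ?_)
          simp [a.ne', d]
      · refine ih u' v' h1 h2 (fun x a b d => h3 x a b ?_)
        simp only [Finset.mem_insert, not_or]
        exact ⟨fun h => hcm (h ▸ ⟨a, b⟩), d⟩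
  rw [Filter.eventually_cofinite] at hR
  refine key hR.toFinset u v le_rfl le_rfl (fun x _ _ h => ?_)
  simpa using h

theorem split_Icc {Q : Set M → Prop} (hU : ∀ s t, Disjoint s t → Q s → Q t → Q (s ∪ t)) {u v : M}
    (huv : u < v) (hpt : ∀ x, u ≤ x → x ≤ v → Q {x}) (hI : Q (Set.Ioo u v)) : Q (Set.Icc u v) := by
  have e : Set.Icc u v = ({u} ∪ Set.Ioo u v) ∪ {v} := by
    rw [Set.singleton_union, Set.Ioo_insert_left huv, Set.union_singleton, Set.Ico_insert_right huv.le]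
  rw [e]
  refine hU _ _ ?_ (hU _ _ ?_ ?_ ?_) ?_
  · simp [huv.ne']
  · simp
  · exact hpt u le_rfl huv.le
  · exact hI
  · exact hpt v huv.le le_rfl

theorem uniform_bound (hO : OMin L M) (hA : D2 L A) (hf : ∀ x, {y | A x y}.Finite) {a b : M}
    (hab : a < b) : ∃ n, ∀ x, a ≤ x → x ≤ b → ∀ y, ¬ Above A n x y := by
  have hmono : ∀ n m x y, n ≤ m → Above A m x y → Above A n x y := by
    intro n
    induction n with
    | zero => exact fun _ _ _ _ _ => trivial
    | succ n ih =>
      intro m x y h hm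
      cases m with
      | zero => omega
      | succ m =>
        obtain ⟨z, h1, h2, h3⟩ := hm
        exact ⟨z, h1, h2, ih m x z (by omega) h3⟩
  have hU : ∀ s t : Set M, Disjoint s t → (∃ n, ∀ x ∈ s, ∀ y, ¬ Above A n x y) →
      (∃ n, ∀ x ∈ t, ∀ y, ¬ Above A n x y) → (∃ n, ∀ x ∈ s ∪ t, ∀ y, ¬ Above A n x y) := by
    rintro s t _ ⟨n, hn⟩ ⟨m, hm⟩
    refine ⟨max n m, ?_⟩
    rintro x (hx | hx) y h
    · exact hn x hx y (hmono _ _ _ _ (le_max_left _ _) h)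
    · exact hm x hx y (hmono _ _ _ _ (le_max_right _ _) h)
  have hpt : ∀ x, ∃ n, ∀ x' ∈ ({x} : Set M), ∀ y, ¬ Above A n x' y := by
    intro x
    obtain ⟨n, hn⟩ := Above.fin (hf x)
    exact ⟨n, by rintro x' rfl; exact hn⟩
  have hI : ∃ n, ∀ x ∈ Set.Ioo a b, ∀ y, ¬ Above A n x y := by
    have hR : ∀ᶠ x in cofinite, GoodX A x := (normal_cof hO hA hf).and
      ((high_free hO hA hf).and (low_free hO hA hf))
    refine split_Ioo (Q := fun s => ∃ n, ∀ x ∈ s, ∀ y, ¬ Above A n x y) hU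
      (fun x _ _ => hpt x) hR (fun u' v' _ _ h => ?_)
    obtain ⟨n, hn⟩ := good_interval hO hA hf h
    exact ⟨n, fun x hx => hn x hx.1 hx.2⟩
  obtain ⟨n, hn⟩ := split_Icc (Q := fun s => ∃ n, ∀ x ∈ s, ∀ y, ¬ Above A n x y) hU hab
    (fun x _ _ => hpt x) hI
  exact ⟨n, fun x h1 h2 => hn x ⟨h1, h2⟩⟩

end unifin

section cells

variable {L : FirstOrder.Language} {M : Type*} [L.Structure M]
  [LinearOrder M] [DenselyOrdered M] [NoMinOrder M] [NoMaxOrder M]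
  [TopologicalSpace M] [OrderTopology M]

variable (L) in
def CShape (D : Set M) (C : Set (M × M)) : Prop :=
  ((∃ h : M → M, DefFunOn1 L D h ∧ ContinuousOn h D ∧
              C = {p : M × M | p.1 ∈ D ∧ p.2 = h p.1}) ∨
           (∃ g h : M → M, DefFunOn1 L D g ∧ ContinuousOn g D ∧
              DefFunOn1 L D h ∧ ContinuousOn h D ∧
              C = {p : M × M | p.1 ∈ D ∧ g p.1 < p.2 ∧ p.2 < h p.1}) ∨
           (∃ h : M → M, DefFunOn1 L D h ∧ ContinuousOn h D ∧
              C = {p : M × M | p.1 ∈ D ∧ p.2 < h p.1}) ∨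
           (∃ g : M → M, DefFunOn1 L D g ∧ ContinuousOn g D ∧
              C = {p : M × M | p.1 ∈ D ∧ g p.1 < p.2}) ∨
           C = {p : M × M | p.1 ∈ D})

def CType (f : M → M → M) (C : Set (M × M)) : Prop :=
  ((∀ x ∈ Prod.fst '' C, StrictMonoOn (f x) {y : M | (x, y) ∈ C}) ∨
         (∀ x ∈ Prod.fst '' C, StrictAntiOn (f x) {y : M | (x, y) ∈ C}) ∨
         (∀ x ∈ Prod.fst '' C, ∀ y₁ ∈ {y : M | (x, y) ∈ C},
            ∀ y₂ ∈ {y : M | (x, y) ∈ C}, f x y₁ = f x y₂))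

variable (L) in
def GC (f : M → M → M) (C : Set (M × M)) : Prop :=
  (¬ ∃ c : M, ∀ y : M, (c, y) ∈ C) ∧
  (∃ D : Set M, ((∃ x₀ : M, D = {x₀}) ∨ IsOpenItvl D) ∧ CShape L D C) ∧ CType f C

variable (L) in
def QC (f : M → M → M) (S : Set (M × M)) : Prop :=
  ∃ 𝒞 : Set (Set (M × M)), 𝒞.Finite ∧ (∀ C ∈ 𝒞, ∀ C' ∈ 𝒞, C ≠ C' → Disjoint C C') ∧
    ⋃₀ 𝒞 = S ∧ ∀ C ∈ 𝒞, GC L f C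

theorem QC.single {f : M → M → M} {C : Set (M × M)} (h : GC L f C) : QC L f C :=
  ⟨{C}, Set.finite_singleton _, by
    rintro _ rfl _ rfl h; exact absurd rfl h, by simp, by rintro _ rfl; exact h⟩

theorem QC.union {f : M → M → M} {S T : Set (M × M)} (hd : Disjoint S T) (hS : QC L f S)
    (hT : QC L f T) : QC L f (S ∪ T) := by
  obtain ⟨c, c1, c2, rfl, c4⟩ := hS
  obtain ⟨d, d1, d2, rfl, d4⟩ := hT
  refine ⟨c ∪ d, c1.union d1, ?_, Set.sUnion_union _ _, ?_⟩
  · rintro C (hC | hC) C' (hC' | hC') h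
    · exact c2 _ hC _ hC' h
    · exact hd.mono (Set.subset_sUnion_of_mem hC) (Set.subset_sUnion_of_mem hC')
    · exact hd.symm.mono (Set.subset_sUnion_of_mem hC) (Set.subset_sUnion_of_mem hC')
    · exact d2 _ hC _ hC' h
  · rintro C (hC | hC)
    · exact c4 _ hC
    · exact d4 _ hC

def DSh (D : Set M) : Prop := (∃ x₀ : M, D = {x₀}) ∨ ∃ u v, D = Ioo u v

theorem DSh.sh {D : Set M} (h : DSh D) : (∃ x₀ : M, D = {x₀}) ∨ IsOpenItvl D :=
  h.imp id fun ⟨u, v, h⟩ => Or.inl ⟨u, v, h⟩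

theorem DSh.defFun (hO : OMin L M) {D : Set M} (h : DSh D) {g : M → M} (hg : F1 L g) :
    DefFunOn1 L D g := by
  have : D1 L (fun x => x ∈ D) := by
    rcases h with ⟨x, rfl⟩ | ⟨u, v, rfl⟩
    · exact DP.eq (DF.var _) (DF.const _)
    · exact DP.and (DP.lt hO (DF.const _) (DF.var _)) (DP.lt hO (DF.var _) (DF.const _))
  exact DP.and (this.comp (DF.var 0)) (DP.eq (hg.comp (DF.var _)) (DF.var _))

def LC (P : M → Prop) (x : M) : Prop := (∀ᶠ x' in 𝓝 x, P x') ∨ (∀ᶠ x' in 𝓝 x, ¬ P x')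

def CO (P : M → Prop) (D : Set M) : Prop := (∀ x ∈ D, P x) ∨ (∀ x ∈ D, ¬ P x)

theorem CO.single (P : M → Prop) (x : M) : CO P {x} := by
  by_cases h : P x
  · left; rintro _ rfl; exact h
  · right; rintro _ rfl; exact h

theorem CO.ioo (hO : OMin L M) {P : M → Prop} (hP : D1 L P) {u v : M}
    (h : ∀ x, u < x → x < v → LC P x) : CO P (Ioo u v) := by
  have key : ∀ c d, u < c → c ≤ d → d < v → (P c ↔ P d) := by
    have aux : ∀ z, u < z → z < v → ∀ᶠ z' in 𝓝 z, (P z' ↔ P z) := by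
      intro z h1 h2
      rcases h z h1 h2 with h | h
      · filter_upwards [h] with z' hz'
        exact iff_of_true hz' h.self_of_nhds
      · filter_upwards [h] with z' hz'
        exact iff_of_false hz' h.self_of_nhds
    intro c d h1 h2 h3
    constructor
    · exact hO.conn hP h2 fun z z1 z2 => aux z (h1.trans_le z1) (z2.trans_lt h3)
    · intro hd
      by_contra hc
      refine hO.conn (P := fun x => ¬ P x) hP.not h2 (fun z z1 z2 => ?_) hc hd
      filter_upwards [aux z (h1.trans_le z1) (z2.trans_lt h3)] with z' hz'
      exact not_congr hz'
  by_cases hex : ∃ x ∈ Ioo u v, P x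
  · left
    obtain ⟨x, hx, hPx⟩ := hex
    intro y hy
    rcases le_total x y with hl | hl
    · exact (key x y hx.1 hl hy.2).1 hPx
    · exact (key y x hy.1 hl hx.2).2 hPx
  · right
    intro x hx hPx
    exact hex ⟨x, hx, hPx⟩

/-- free band above `G` -/
def UB (A G : M → M → Prop) (x y : M) : Prop := G x y ∧ ∀ z, G x z → A x z → y < z

def XT (f : M → M → M) (A G : M → M → Prop) (t : Fin 3) (x : M) : Prop :=
  ∀ y, UB A G x y → LocT (f x) t y

variable (L) in
def LowG (D : Set M) (G : M → M → Prop) : Prop :=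
  (∃ g, F1 L g ∧ ContinuousOn g D ∧ G = fun x y => g x < y) ∨ G = fun _ _ => True

theorem LowG.def2 (hO : OMin L M) {D : Set M} {G : M → M → Prop} (h : LowG L D G) : D2 L G := by
  rcases h with ⟨g, hg, -, rfl⟩ | rfl
  · exact DP.lt hO (hg.comp (DF.var _)) (DF.var _)
  · exact DP.prop True

theorem LowG.mono {D D' : Set M} {G : M → M → Prop} (h : LowG L D G) (hD : D' ⊆ D) :
    LowG L D' G := h.imp (fun ⟨g, h1, h2, h3⟩ => ⟨g, h1, h2.mono hD, h3⟩) id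

theorem LowG.up {D : Set M} {G : M → M → Prop} (h : LowG L D G) {x y z : M} (hy : G x y)
    (hyz : y ≤ z) : G x z := by
  rcases h with ⟨g, hg, -, rfl⟩ | rfl
  · exact lt_of_lt_of_le hy hyz
  · trivial

variable {f : M → M → M} {A G : M → M → Prop}

theorem F2.fiber (hf : F2 L f) (x : M) : F1 L (f x) :=
  D3.comp hf (DF.const _) (DF.var _) (DF.var _)

theorem UB.def (hO : OMin L M) (hA : D2 L A) (hG : D2 L G) : D2 L (UB A G) := by
  unfold D2 UB
  repeat' first
    | exact DF.var _ | apply DP.all | apply DP.and | apply DP.imp | apply DP.lt hO | apply hA.comp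
    | apply hG.comp

theorem XT.def (hO : OMin L M) (hA : D2 L A) (hG : D2 L G) (hf : F2 L f) (t : Fin 3) :
    D1 L (XT f A G t) := by
  have h1 := UB.def hO hA hG
  have h2 := LocT.def2 hO hf t
  unfold D1 XT
  repeat' first
    | exact DF.var _ | apply DP.all | apply DP.imp | apply h1.comp | apply h2.comp

theorem UB.typ (hO : OMin L M) (hf : F2 L f) {D : Set M} (hG : LowG L D G)
    (hAT : ∀ x y, ¬ A x y → LocT (f x) 0 y ∨ LocT (f x) 1 y ∨ LocT (f x) 2 y) {x y1 y2 : M}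
    (h1 : UB A G x y1) (h2 : UB A G x y2) (h12 : y1 ≤ y2) (t : Fin 3) :
    LocT (f x) t y1 ↔ LocT (f x) t y2 := by
  apply locT_const hO (hf.fiber x) h12
  intro y a1 a2
  apply hAT
  intro hA
  exact absurd (h2.2 y (hG.up h1.1 a1) hA) (not_lt.2 a2)

theorem XT.ex (hO : OMin L M) (hf : F2 L f) {D : Set M} (hG : LowG L D G)
    (hAT : ∀ x y, ¬ A x y → LocT (f x) 0 y ∨ LocT (f x) 1 y ∨ LocT (f x) 2 y) (x : M) :
    ∃ t, XT f A G t x := by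
  by_cases hex : ∃ y, UB A G x y
  · obtain ⟨y, hy⟩ := hex
    have key : ∀ t, LocT (f x) t y → XT f A G t x := by
      intro t ht y' hy'
      rcases le_total y y' with h | h
      · exact (UB.typ hO hf hG hAT hy hy' h t).1 ht
      · exact (UB.typ hO hf hG hAT hy' hy h t).2 ht
    rcases hAT x y (fun h => lt_irrefl _ (hy.2 y hy.1 h)) with h | h | h
    · exact ⟨_, key _ h⟩
    · exact ⟨_, key _ h⟩
    · exact ⟨_, key _ h⟩
  · exact ⟨0, fun y hy => absurd ⟨y, hy⟩ hex⟩

theorem band_type (hO : OMin L M) (hf : F2 L f) {D : Set M} (hG : LowG L D G)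
    (hAT : ∀ x y, ¬ A x y → LocT (f x) 0 y ∨ LocT (f x) 1 y ∨ LocT (f x) 2 y)
    (hX : ∀ t, CO (XT f A G t) D) : CType f {p : M × M | p.1 ∈ D ∧ UB A G p.1 p.2} := by
  have hall : ∃ t, ∀ x ∈ D, XT f A G t x := by
    by_cases hne : ∃ x, x ∈ D
    · obtain ⟨x, hx⟩ := hne
      obtain ⟨t, ht⟩ := XT.ex hO hf hG hAT x
      refine ⟨t, (hX t).resolve_right fun h => h x hx ht⟩
    · exact ⟨0, fun x hx => absurd ⟨x, hx⟩ hne⟩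
  obtain ⟨t, ht⟩ := hall
  have key : ∀ x ∈ D, ∀ y1 y2, UB A G x y1 → UB A G x y2 → y1 < y2 → Ty t (f x y1) (f x y2) := by
    intro x hx y1 y2 h1 h2 h12
    refine locT_global hO (hf.fiber x) h12 fun y a1 a2 => ht x hx y ⟨hG.up h1.1 a1, fun z z1 z2 => ?_⟩
    exact a2.trans_lt (h2.2 z z1 z2)
  unfold CType
  fin_cases t
  · left
    rintro x ⟨p, hp, rfl⟩ y1 h1 y2 h2 h12
    exact key _ hp.1 y1 y2 h1.2 h2.2 h12
  · right; right
    rintro x ⟨p, hp, rfl⟩ y1 h1 y2 h2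
    rcases lt_trichotomy y1 y2 with h | rfl | h
    · exact key _ hp.1 y1 y2 h1.2 h2.2 h
    · rfl
    · exact (key _ hp.1 y2 y1 h2.2 h1.2 h).symm
  · right; left
    rintro x ⟨p, hp, rfl⟩ y1 h1 y2 h2 h12
    exact key _ hp.1 y1 y2 h1.2 h2.2 h12

theorem nice (hO : OMin L M) (hf : F2 L f) {D : Set M} (hD : DSh D) (hG : LowG L D G)
    (hAT : ∀ x y, ¬ A x y → LocT (f x) 0 y ∨ LocT (f x) 1 y ∨ LocT (f x) 2 y)
    (hA0 : ∀ x, ∃ y, A x y) {σ : M → M} (hσ : F1 L σ) (hσc : ContinuousOn σ D)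
    (hσm : ∀ x, (∃ y, G x y ∧ A x y) → (G x (σ x) ∧ A x (σ x)) ∧ ∀ y, (G x y ∧ A x y) → σ x ≤ y)
    (hE : CO (fun x => ∃ y, G x y ∧ A x y) D) (hX : ∀ t, CO (XT f A G t) D)
    (hrec : (∀ x ∈ D, ∃ y, G x y ∧ A x y) → QC L f {p : M × M | p.1 ∈ D ∧ σ p.1 < p.2}) :
    QC L f {p : M × M | p.1 ∈ D ∧ G p.1 p.2} := by
  have hty := band_type hO hf hG hAT hX
  rcases hE with hE | hE
  · have hU : ∀ x ∈ D, ∀ y, UB A G x y ↔ G x y ∧ y < σ x := by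
      intro x hx y
      obtain ⟨h1, h2⟩ := hσm x (hE x hx)
      exact ⟨fun h => ⟨h.1, h.2 _ h1.1 h1.2⟩, fun h => ⟨h.1, fun z z1 z2 =>
        h.2.trans_le (h2 z ⟨z1, z2⟩)⟩⟩
    have e1 : {p : M × M | p.1 ∈ D ∧ UB A G p.1 p.2} = {p : M × M | p.1 ∈ D ∧ G p.1 p.2 ∧ p.2 < σ p.1} := by
      ext p
      exact and_congr_right fun h => hU _ h _
    rw [e1] at hty
    have q1 : QC L f {p : M × M | p.1 ∈ D ∧ G p.1 p.2 ∧ p.2 < σ p.1} := by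
      refine QC.single ⟨?_, ⟨D, hD.sh, ?_⟩, hty⟩
      · rintro ⟨c, hc⟩
        exact lt_irrefl _ (hc (σ c)).2.2
      · rcases hG with ⟨g, hg, hgc, rfl⟩ | rfl
        · exact Or.inr (Or.inl ⟨g, σ, hD.defFun hO hg, hgc, hD.defFun hO hσ, hσc, rfl⟩)
        · exact Or.inr (Or.inr (Or.inl ⟨σ, hD.defFun hO hσ, hσc, by simp⟩))
    have q2 : QC L f {p : M × M | p.1 ∈ D ∧ p.2 = σ p.1} := by
      refine QC.single ⟨?_, ⟨D, hD.sh, Or.inl ⟨σ, hD.defFun hO hσ, hσc, rfl⟩⟩, ?_⟩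
      · rintro ⟨c, hc⟩
        obtain ⟨y, hy⟩ := exists_gt (σ c)
        exact hy.ne' (hc y).2
      · right; right
        rintro x - y1 h1 y2 h2
        exact congrArg (f x) (h1.2.trans h2.2.symm)
    have q3 := hrec hE
    have q := (q1.union ?_ q2).union ?_ q3
    · convert q using 1
      ext p
      constructor
      · rintro ⟨h1, h2⟩
        rcases lt_trichotomy p.2 (σ p.1) with h | h | h
        · exact Or.inl (Or.inl ⟨h1, h2, h⟩)
        · exact Or.inl (Or.inr ⟨h1, h⟩)
        · exact Or.inr ⟨h1, h⟩
      · rintro ((h | h) | h)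
        · exact ⟨h.1, h.2.1⟩
        · refine ⟨h.1, ?_⟩
          rw [h.2]; exact (hσm _ (hE _ h.1)).1.1
        · exact ⟨h.1, hG.up (hσm _ (hE _ h.1)).1.1 h.2.le⟩
    · rw [Set.disjoint_left]
      rintro p h1 h2
      exact h1.2.2.ne h2.2
    · rw [Set.disjoint_left]
      rintro p (h1 | h1) h2
      · exact lt_asymm h1.2.2 h2.2
      · exact h2.2.ne' h1.2
  · have e1 : {p : M × M | p.1 ∈ D ∧ UB A G p.1 p.2} = {p : M × M | p.1 ∈ D ∧ G p.1 p.2} := by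
      ext p
      refine and_congr_right fun h => ⟨fun h => h.1, fun h' => ⟨h', fun z z1 z2 => ?_⟩⟩
      exact absurd ⟨z, z1, z2⟩ (hE _ h)
    rw [e1] at hty
    refine QC.single ⟨?_, ⟨D, hD.sh, ?_⟩, hty⟩
    · rintro ⟨c, hc⟩
      obtain ⟨y, hy⟩ := hA0 c
      exact hE c (hc y).1 ⟨y, (hc y).2, hy⟩
    · rcases hG with ⟨g, hg, hgc, rfl⟩ | rfl
      · exact Or.inr (Or.inr (Or.inr (Or.inl ⟨g, hD.defFun hO hg, hgc, rfl⟩)))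
      · exact Or.inr (Or.inr (Or.inr (Or.inr (by simp))))

theorem step (hO : OMin L M) (hf : F2 L f) (hA : D2 L A) (hfin : ∀ x, {y | A x y}.Finite)
    (hAT : ∀ x y, ¬ A x y → LocT (f x) 0 y ∨ LocT (f x) 1 y ∨ LocT (f x) 2 y)
    (hA0 : ∀ x, ∃ y, A x y) {D : Set M} (hD : DSh D) (hG : LowG L D G)
    (hrec : ∀ (σ : M → M) (D' : Set M), DSh D' → D' ⊆ D → F1 L σ → ContinuousOn σ D' →
      (∀ x ∈ D', G x (σ x) ∧ A x (σ x)) → QC L f {p : M × M | p.1 ∈ D' ∧ σ p.1 < p.2}) :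
    QC L f {p : M × M | p.1 ∈ D ∧ G p.1 p.2} := by
  have hG2 := hG.def2 hO
  have hB : D2 L (fun x y => G x y ∧ A x y) := DP.and hG2 hA
  obtain ⟨σ, hσ, hσm⟩ := exists_minF hO hB (fun x => (hfin x).subset fun y hy => hy.2)
  have hE : D1 L (fun x => ∃ y, G x y ∧ A x y) := DP.ex (hB.comp (DF.var 1) (DF.var 0))
  have hX := XT.def hO hA hG2 hf
  have hpt : ∀ x ∈ D, QC L f {p : M × M | p.1 ∈ ({x} : Set M) ∧ G p.1 p.2} := by
    intro x hx
    have hs : ({x} : Set M) ⊆ D := by simpa using hx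
    refine nice hO hf (Or.inl ⟨x, rfl⟩) (hG.mono hs) hAT hA0 hσ (continuousOn_singleton _ _) hσm
      (CO.single _ _) (fun t => CO.single _ _) fun h => ?_
    exact hrec σ _ (Or.inl ⟨x, rfl⟩) hs hσ (continuousOn_singleton _ _) fun x hx => (hσm x (h x hx)).1
  rcases hD with ⟨x, rfl⟩ | ⟨u, v, rfl⟩
  · exact hpt x rfl
  · have hR : ∀ᶠ x in cofinite, ContinuousAt σ x ∧ LC (fun x => ∃ y, G x y ∧ A x y) x ∧
        LC (XT f A G 0) x ∧ LC (XT f A G 1) x ∧ LC (XT f A G 2) x := by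
      filter_upwards [cont_cof hO hσ, hO.locconst hE, hO.locconst (hX 0), hO.locconst (hX 1),
        hO.locconst (hX 2)] with x h1 h2 h3 h4 h5
      exact ⟨h1, h2, h3, h4, h5⟩
    refine split_Ioo (Q := fun s => QC L f {p : M × M | p.1 ∈ s ∧ G p.1 p.2}) ?_
      (fun x h1 h2 => hpt x ⟨h1, h2⟩) hR ?_
    · intro s t hd hs ht
      have := hs.union ?_ ht
      · convert this using 1
        ext p
        simp only [Set.mem_union, Set.mem_setOf_eq]
        tauto
      · rw [Set.disjoint_left] at hd ⊢
        exact fun p h1 h2 => hd h1.1 h2.1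
    · intro u' v' hu hv h
      have hs : Ioo u' v' ⊆ Ioo u v := Set.Ioo_subset_Ioo hu hv
      have hc : ContinuousOn σ (Ioo u' v') := fun x hx => (h x hx.1 hx.2).1.continuousWithinAt
      refine nice hO hf (Or.inr ⟨_, _, rfl⟩) (hG.mono hs) hAT hA0 hσ hc hσm
        (CO.ioo hO hE fun x h1 h2 => (h x h1 h2).2.1) (fun t => ?_) fun h => ?_
      · fin_cases t
        · exact CO.ioo hO (hX 0) fun x h1 h2 => (h x h1 h2).2.2.1
        · exact CO.ioo hO (hX 1) fun x h1 h2 => (h x h1 h2).2.2.2.1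
        · exact CO.ioo hO (hX 2) fun x h1 h2 => (h x h1 h2).2.2.2.2
      · exact hrec σ _ (Or.inr ⟨_, _, rfl⟩) hs hσ hc fun x hx => (hσm x (h x hx)).1

theorem main_ind (hO : OMin L M) (hf : F2 L f) (hA : D2 L A) (hfin : ∀ x, {y | A x y}.Finite)
    (hAT : ∀ x y, ¬ A x y → LocT (f x) 0 y ∨ LocT (f x) 1 y ∨ LocT (f x) 2 y)
    (hA0 : ∀ x, ∃ y, A x y) (N : ℕ) : ∀ (G : M → M → Prop) (D : Set M), DSh D → LowG L D G →
      (∀ x ∈ D, ∀ z, G x z → A x z → ¬ Above A N x z) →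
      QC L f {p : M × M | p.1 ∈ D ∧ G p.1 p.2} := by
  induction N with
  | zero =>
    intro G D hD hG hN
    refine step hO hf hA hfin hAT hA0 hD hG fun σ D' hD' hs hσ hc h => ?_
    have he : {p : M × M | p.1 ∈ D' ∧ σ p.1 < p.2} = ∅ := by
      ext p
      simp only [Set.mem_setOf_eq, Set.mem_empty_iff_false, iff_false]
      rintro ⟨h1, -⟩
      exact hN _ (hs h1) _ (h _ h1).1 (h _ h1).2 trivial
    rw [he]
    exact ⟨∅, Set.finite_empty, by simp, by simp, by simp⟩
  | succ N ih =>
    intro G D hD hG hN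
    refine step hO hf hA hfin hAT hA0 hD hG fun σ D' hD' hs hσ hc h => ?_
    refine ih (fun x y => σ x < y) D' hD' (Or.inl ⟨σ, hσ, hc, rfl⟩) fun x hx z h1 h2 h3 => ?_
    exact hN x (hs hx) _ (h x hx).1 (h x hx).2 ⟨z, h1, h2, h3⟩

theorem main_QC [Nonempty M] (hO : OMin L M) (hf : F2 L f) {a b : M} (hab : a < b) :
    QC L f (Icc a b ×ˢ (univ : Set M)) := by
  obtain ⟨d0⟩ := ‹Nonempty M›
  set A : M → M → Prop := fun x y => y = d0 ∨
    ¬ (LocT (f x) 0 y ∨ LocT (f x) 1 y ∨ LocT (f x) 2 y) with hAdef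
  have hA : D2 L A := DP.or (DP.eq (DF.var _) (DF.const _))
    (DP.not (DP.or (LocT.def2 hO hf 0) (DP.or (LocT.def2 hO hf 1) (LocT.def2 hO hf 2))))
  have hfin : ∀ x, {y | A x y}.Finite := by
    intro x
    have := locT_cof hO (hf.fiber x)
    rw [Filter.eventually_cofinite] at this
    exact (Set.finite_singleton d0).union this
  have hAT : ∀ x y, ¬ A x y → LocT (f x) 0 y ∨ LocT (f x) 1 y ∨ LocT (f x) 2 y := by
    intro x y h
    by_contra h'
    exact h (Or.inr h')
  obtain ⟨N, hN⟩ := uniform_bound hO hA hfin hab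
  have key : ∀ D, DSh D → D ⊆ Icc a b → QC L f {p : M × M | p.1 ∈ D ∧ True} := fun D hD hs =>
    main_ind hO hf hA hfin hAT (fun x => ⟨d0, Or.inl rfl⟩) N (fun _ _ => True) D hD (Or.inr rfl)
      fun x hx z _ _ => hN x (hs hx).1 (hs hx).2 z
  have := split_Icc (Q := fun s => QC L f {p : M × M | p.1 ∈ s ∧ True}) (u := a) (v := b) ?_ hab
    (fun x h1 h2 => key _ (Or.inl ⟨x, rfl⟩) (by simp [h1, h2]))
    (key _ (Or.inr ⟨a, b, rfl⟩) Set.Ioo_subset_Icc_self)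
  · convert this using 1
    ext p
    simp
  · intro s t hd hs ht
    have := hs.union ?_ ht
    · convert this using 1
      ext p
      simp only [Set.mem_union, Set.mem_setOf_eq]
      tauto
    · rw [Set.disjoint_left] at hd ⊢
      exact fun p h1 h2 => hd h1.1 h2.1

end cells

/-- Cell partition adapted to fiberwise monotonicity. -/
theorem stmt_17 (L : FirstOrder.Language) (M : Type*) [L.Structure M]
    [LinearOrder M] [DenselyOrdered M] [NoMinOrder M] [NoMaxOrder M] [Nonempty M]
    [TopologicalSpace M] [OrderTopology M]
    (hlt : DefSet L {x : Fin 2 → M | x 0 < x 1})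
    (homin : ∀ X : Set M, DefSet1 L X → FinUnionPtsItvls X)
    (a b : M) (hab : a < b) (f : M → M → M)
    (hfdef : DefSet L {x : Fin 3 → M | x 0 ∈ Set.Icc a b ∧ f (x 0) (x 1) = x 2}) :
    ∃ (k : ℕ) (C : Fin k → Set (M × M)),
      (⋃ i, C i) = Set.Icc a b ×ˢ (Set.univ : Set M) ∧
      (∀ i j, i ≠ j → Disjoint (C i) (C j)) ∧
      ∀ i,
        (¬ ∃ c : M, ∀ y : M, (c, y) ∈ C i) ∧
        (∃ D : Set M, ((∃ x₀ : M, D = {x₀}) ∨ IsOpenItvl D) ∧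
          ((∃ h : M → M, DefFunOn1 L D h ∧ ContinuousOn h D ∧
              C i = {p : M × M | p.1 ∈ D ∧ p.2 = h p.1}) ∨
           (∃ g h : M → M, DefFunOn1 L D g ∧ ContinuousOn g D ∧
              DefFunOn1 L D h ∧ ContinuousOn h D ∧
              C i = {p : M × M | p.1 ∈ D ∧ g p.1 < p.2 ∧ p.2 < h p.1}) ∨
           (∃ h : M → M, DefFunOn1 L D h ∧ ContinuousOn h D ∧
              C i = {p : M × M | p.1 ∈ D ∧ p.2 < h p.1}) ∨
           (∃ g : M → M, DefFunOn1 L D g ∧ ContinuousOn g D ∧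
              C i = {p : M × M | p.1 ∈ D ∧ g p.1 < p.2}) ∨
           C i = {p : M × M | p.1 ∈ D})) ∧
        ((∀ x ∈ Prod.fst '' C i, StrictMonoOn (f x) {y : M | (x, y) ∈ C i}) ∨
         (∀ x ∈ Prod.fst '' C i, StrictAntiOn (f x) {y : M | (x, y) ∈ C i}) ∨
         (∀ x ∈ Prod.fst '' C i, ∀ y₁ ∈ {y : M | (x, y) ∈ C i},
            ∀ y₂ ∈ {y : M | (x, y) ∈ C i}, f x y₁ = f x y₂)) := by
    classical
  have hO : OMin L M := ⟨hlt, fun P hP => homin _ hP⟩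
  set f' : M → M → M := fun x y => if x ∈ Icc a b then f x y else y with hf'
  have hF : F2 L f' := by
    have h1 : DP L (fun v : Fin 3 → M => v 0 ∈ Icc a b) :=
      DP.and (DP.le hO (DF.const _) (DF.var _)) (DP.le hO (DF.var _) (DF.const _))
    have h2 : DP L (fun v : Fin 3 → M => v 0 ∈ Icc a b ∧ f (v 0) (v 1) = v 2) := hfdef
    have h3 := h2.or (h1.not.and (DP.eq (DF.var 1) (DF.var 2)))
    unfold F2 D3
    convert h3 using 2 with v
    by_cases h : v 0 ∈ Icc a b <;> simp only [hf', h, if_true, if_false] <;> simp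
  obtain ⟨𝒞, h1, h2, h3, h4⟩ := main_QC hO hF hab
  obtain ⟨k, C, hinj, hC⟩ := h1.fin_param
  have hmem : ∀ i, C i ∈ 𝒞 := fun i => by rw [← hC]; exact ⟨i, rfl⟩
  refine ⟨k, C, ?_, fun i j hij => h2 _ (hmem i) _ (hmem j) (hinj.ne hij), fun i => ?_⟩
  · rw [← h3, ← hC, Set.sUnion_range]
  · obtain ⟨g1, g2, g3⟩ := h4 _ (hmem i)
    refine ⟨g1, g2, ?_⟩
    have he : ∀ x ∈ Prod.fst '' C i, f' x = f x := by
      rintro x ⟨p, hp, rfl⟩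
      have : p ∈ Icc a b ×ˢ (univ : Set M) := by rw [← h3]; exact ⟨_, hmem i, hp⟩
      funext y
      simp only [hf', if_pos this.1]
    refine g3.imp ?_ (Or.imp ?_ ?_)
    · intro h x hx; rw [← he x hx]; exact h x hx
    · intro h x hx; rw [← he x hx]; exact h x hx
    · intro h x hx; rw [← he x hx]; exact h x hx
end
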